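/- arXiv:math/9811004 — 3 statements merged into one kernel-verified Lean document; each statement's English description precedes it below -/
import Mathlib

section
/- Let f be a positive integer and p a prime with p > f + 1. Then for every partition (λ_1, ..., λ_k) of f, the number Ψ_{n-f}^p(λ_1, ..., λ_k) is independent of n provided n ≥ f + 2λ_1; that is, for all n, n' ≥ f + 2λ_1, Ψ_{n-f}^p(λ_1, ..., λ_k) = Ψ_{n'-f}^p(λ_1, ..., λ_k). -/
/-- `℧_1(H) = ⟨h^p : h ∈ H⟩` for a subgroup `H`. -/
def MhoOne (p : ℕ) {P : Type} [Group P] (H : Subgroup P) : Subgroup P :=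
  Subgroup.closure {y : P | ∃ x ∈ H, y = x ^ p}

/-- A `p`-group `P` is regular if for all `x y : P` there is
`z ∈ ℧_1(γ_2(⟨x,y⟩))` with `x^p * y^p = (x*y)^p * z`. -/
def IsRegularPGroup (p : ℕ) (P : Type) [Group P] : Prop :=
  ∀ x y : P,
    ∃ z ∈ MhoOne p ⁅Subgroup.closure {x, y}, Subgroup.closure {x, y}⁆,
      x ^ p * y ^ p = (x * y) ^ p * z

/-- `Ω_i(P) = ⟨x : x^(p^i) = 1⟩`. -/
def OmegaSubgroup (p : ℕ) (P : Type) [Group P] (i : ℕ) : Subgroup P :=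
  Subgroup.closure {x : P | x ^ p ^ i = 1}

/-- `ω_i(P)`, defined by `p ^ ω_i(P) = |Ω_i(P)/Ω_{i-1}(P)|`. -/
noncomputable def omegaInv (p : ℕ) (P : Type) [Group P] (i : ℕ) : ℕ :=
  ((OmegaSubgroup p P (i - 1)).relIndex (OmegaSubgroup p P i)).factorization p

/-- `μ_j(P)` (for `j ≥ 1`): the dual partition of `(ω_1(P), ω_2(P), ...)`;
the type invariants of `P` are `μ_1(P) ≥ μ_2(P) ≥ ...`. -/
noncomputable def muInv (p : ℕ) (P : Type) [Group P] (j : ℕ) : ℕ :=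
  Nat.card {i : ℕ // 1 ≤ i ∧ j ≤ omegaInv p P i}

/-- `P` has type invariants given by the list `l`. -/
def HasTypeInvariants (p : ℕ) (P : Type) [Group P] (l : List ℕ) : Prop :=
  ∀ i : ℕ, muInv p P (i + 1) = l.getD i 0

/-- The multiplication extracted from a group structure. -/
def mulOfGroup (G : Type) (s : Group G) : Mul G := by letI := s; infer_instance

/-- The number of isomorphism classes of groups of order `N` whose group structure
satisfies the predicate `Q`. -/
noncomputable def groupClassCount (N : ℕ) (Q : Group (Fin N) → Prop) : ℕ :=
  Nat.card (Quot fun s t : {s : Group (Fin N) // Q s} =>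
    Nonempty (@MulEquiv (Fin N) (Fin N) (mulOfGroup _ s.1) (mulOfGroup _ t.1)))

/-- `Ψ_e^p(λ)`: the number of isomorphism classes of regular `p`-groups of type
`(e, λ_1, ..., λ_k)`; such a group has order `p ^ (e + λ_1 + ... + λ_k)`. -/
noncomputable def PsiType (p e : ℕ) (l : List ℕ) : ℕ :=
  groupClassCount (p ^ (e + l.sum)) fun s =>
    letI := s
    IsRegularPGroup p (Fin (p ^ (e + l.sum))) ∧
      HasTypeInvariants p (Fin (p ^ (e + l.sum))) (e :: l)


theorem map_mhoOne (p : ℕ) {P Q : Type} [Group P] [Group Q] (f : P →* Q) (H : Subgroup P) :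
    (MhoOne p H).map f = MhoOne p (H.map f) := by
  unfold MhoOne
  rw [MonoidHom.map_closure]
  congr 1
  ext y
  constructor
  · rintro ⟨_, ⟨x, hx, rfl⟩, rfl⟩
    exact ⟨f x, ⟨x, hx, rfl⟩, by simp⟩
  · rintro ⟨_, ⟨x, hx, rfl⟩, rfl⟩
    exact ⟨x ^ p, ⟨x, hx, rfl⟩, by simp⟩

theorem map_mho_comm (p : ℕ) {P Q : Type} [Group P] [Group Q] (f : P →* Q) (x y : P) :
    (MhoOne p ⁅Subgroup.closure {x, y}, Subgroup.closure {x, y}⁆).map f =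
      MhoOne p ⁅Subgroup.closure {f x, f y}, Subgroup.closure {f x, f y}⁆ := by
  rw [map_mhoOne, Subgroup.map_commutator, MonoidHom.map_closure, Set.image_pair]

theorem IsRegularPGroup.of_surj {p : ℕ} {P Q : Type} [Group P] [Group Q]
    (h : IsRegularPGroup p P) (f : P →* Q) (hf : Function.Surjective f) :
    IsRegularPGroup p Q := by
  intro x y
  obtain ⟨x, rfl⟩ := hf x
  obtain ⟨y, rfl⟩ := hf y
  obtain ⟨z, hz, e⟩ := h x y
  refine ⟨f z, ?_, by rw [← map_pow, ← map_pow, ← map_mul, e]; simp⟩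
  rw [← map_mho_comm]
  exact ⟨z, hz, rfl⟩

theorem IsRegularPGroup.of_inj {p : ℕ} {P Q : Type} [Group P] [Group Q]
    (h : IsRegularPGroup p Q) (f : P →* Q) (hf : Function.Injective f) :
    IsRegularPGroup p P := by
  intro x y
  obtain ⟨z, hz, e⟩ := h (f x) (f y)
  rw [← map_mho_comm] at hz
  obtain ⟨z, hz, rfl⟩ := hz
  refine ⟨z, hz, hf ?_⟩
  simpa using e

theorem IsRegularPGroup.prod_comm {p : ℕ} {P A : Type} [Group P] [CommGroup A]
    (h : IsRegularPGroup p P) : IsRegularPGroup p (P × A) := by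
  intro x y
  obtain ⟨z, hz, e⟩ := h x.1 y.1
  have := map_mho_comm p (MonoidHom.fst P A) x y
  simp only [MonoidHom.coe_fst] at this
  rw [← this] at hz
  obtain ⟨z, hz, rfl⟩ := hz
  have h2 : z.2 = 1 := by
    have h3 := map_mho_comm p (MonoidHom.snd P A) x y
    have h4 : z.2 ∈ (MhoOne p ⁅Subgroup.closure {x, y}, Subgroup.closure {x, y}⁆).map
      (MonoidHom.snd P A) := ⟨z, hz, rfl⟩
    rw [h3] at h4
    have h5 : ⁅Subgroup.closure {(MonoidHom.snd P A) x, (MonoidHom.snd P A) y},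
      Subgroup.closure {(MonoidHom.snd P A) x, (MonoidHom.snd P A) y}⁆ = ⊥ := by
      rw [eq_bot_iff, Subgroup.commutator_le]
      intro a _ b _
      rw [Subgroup.mem_bot, commutatorElement_eq_one_iff_mul_comm]
      exact mul_comm _ _
    rw [h5] at h4
    have : MhoOne p (⊥ : Subgroup A) = ⊥ := by
      rw [eq_bot_iff]
      unfold MhoOne
      rw [Subgroup.closure_le]
      rintro _ ⟨x, hx, rfl⟩
      have : x = 1 := hx
      simp [this]
    rw [this] at h4
    exact h4
  refine ⟨z, hz, Prod.ext e ?_⟩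
  simp [h2, mul_pow]

theorem normal_commutator_le {G : Type} [Group G] (T : Subgroup G) [T.Normal] (u v : G)
    (hc : Subgroup.closure {u, v} = ⊤) (h : ∀ g, u⁻¹ * (g * u * g⁻¹) ∈ T) (a b : G) :
    a * b * a⁻¹ * b⁻¹ ∈ T := by
  have hu : ∀ g : G, ((g : G ⧸ T)) * (u : G ⧸ T) = (u : G ⧸ T) * (g : G ⧸ T) := by
    intro g
    have := (QuotientGroup.eq (s := T)).2 (h g)
    rw [QuotientGroup.mk_mul, QuotientGroup.mk_mul, QuotientGroup.mk_inv] at this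
    rw [eq_mul_inv_iff_mul_eq] at this
    exact this.symm
  have hv : ∀ g : G, ((g : G ⧸ T)) * (v : G ⧸ T) = (v : G ⧸ T) * (g : G ⧸ T) := by
    intro g
    have hg : g ∈ Subgroup.closure {u, v} := by rw [hc]; trivial
    have hle : Subgroup.closure {u, v} ≤
        (Subgroup.centralizer {(v : G ⧸ T)}).comap (QuotientGroup.mk' T) := by
      rw [Subgroup.closure_le]
      rintro x (rfl | rfl)
      · simp [Subgroup.mem_centralizer_singleton_iff]
        exact (hu v).symm
      · simp [Subgroup.mem_centralizer_singleton_iff]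
    have := hle hg
    simp [Subgroup.mem_centralizer_singleton_iff] at this
    exact this
  have hab : ∀ g k : G, ((k : G ⧸ T)) * (g : G ⧸ T) = (g : G ⧸ T) * (k : G ⧸ T) := by
    intro g k
    have hg : g ∈ Subgroup.closure {u, v} := by rw [hc]; trivial
    have hle : Subgroup.closure {u, v} ≤
        (Subgroup.centralizer {(k : G ⧸ T)}).comap (QuotientGroup.mk' T) := by
      rw [Subgroup.closure_le]
      rintro x (rfl | rfl)
      · simp [Subgroup.mem_centralizer_singleton_iff]
        exact (hu k).symm
      · simp [Subgroup.mem_centralizer_singleton_iff]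
        exact (hv k).symm
    have := hle hg
    simp [Subgroup.mem_centralizer_singleton_iff] at this
    exact this.symm
  rw [← QuotientGroup.eq_one_iff]
  have := hab a b
  simp only [QuotientGroup.mk_mul, QuotientGroup.mk_inv]
  rw [← this]; group

theorem reg_key_step {p : ℕ} [Fact p.Prime] {G : Type} [Group G] [Finite G] (hP : IsPGroup p G)
    (hR : IsRegularPGroup p G)
    (S : ∀ H : Subgroup G, H ≠ ⊤ → ∀ x ∈ H, ∀ y ∈ H, x ^ p = y ^ p ↔ (x⁻¹ * y) ^ p = 1)
    (u v : G) (hc : Subgroup.closure {u, v} = ⊤) (hu : ∀ g, u ^ p = (g * u * g⁻¹) ^ p) (x y : G) :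
    x ^ p * y ^ p = (x * y) ^ p := by
  rcases IsCoatomic.eq_top_or_exists_le_coatom (Subgroup.zpowers u) with htop | ⟨M, hM, hle⟩
  · have hx : x ∈ Subgroup.zpowers u := by rw [htop]; trivial
    have hy : y ∈ Subgroup.zpowers u := by rw [htop]; trivial
    obtain ⟨i, rfl⟩ := hx
    obtain ⟨j, rfl⟩ := hy
    exact ((Commute.zpow_zpow_self u i j).mul_pow p).symm
  · have := hP.isNilpotent
    have hMn : M.Normal := Subgroup.NormalizerCondition.normal_of_coatom M
      (Group.normalizerCondition_of_isNilpotent) hM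
    have hS := S M hM.1
    let T : Subgroup G :=
      { carrier := {t | t ∈ M ∧ t ^ p = 1}
        one_mem' := ⟨M.one_mem, one_pow p⟩
        mul_mem' := by
          rintro a b ⟨ha, ha'⟩ ⟨hb, hb'⟩
          refine ⟨M.mul_mem ha hb, ?_⟩
          have := (hS a⁻¹ (M.inv_mem ha) b hb).1 (by simp [ha', hb'])
          simpa using this
        inv_mem' := by
          rintro a ⟨ha, ha'⟩
          exact ⟨M.inv_mem ha, by simp [ha']⟩ }
    have : T.Normal := ⟨by
      rintro t ⟨ht, ht'⟩ g
      exact ⟨hMn.conj_mem t ht g, by simp [conj_pow, ht']⟩⟩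
    have huM : u ∈ M := hle (Subgroup.mem_zpowers u)
    have hcT := normal_commutator_le T u v hc (fun g =>
      ⟨M.mul_mem (M.inv_mem huM) (hMn.conj_mem u huM g),
        (hS u huM _ (hMn.conj_mem u huM g)).1 (hu g)⟩)
    obtain ⟨z, hz, e⟩ := hR x y
    have : MhoOne p ⁅Subgroup.closure {x, y}, Subgroup.closure {x, y}⁆ ≤ ⊥ := by
      unfold MhoOne
      rw [Subgroup.closure_le]
      rintro _ ⟨d, hd, rfl⟩
      have : ⁅Subgroup.closure {x, y}, Subgroup.closure {x, y}⁆ ≤ T := by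
        rw [Subgroup.commutator_le]
        intro a _ b _
        exact hcT a b
      exact (this hd).2
    have hz1 : z = 1 := this hz
    rw [e, hz1, mul_one]

theorem reg_key_one (p : ℕ) [Fact p.Prime] : ∀ (n : ℕ) (G : Type) [Group G] [Finite G],
    Nat.card G = n → IsPGroup p G → IsRegularPGroup p G →
    ∀ x y : G, x ^ p = y ^ p ↔ (x⁻¹ * y) ^ p = 1 := by
  intro n
  induction n using Nat.strong_induction_on with
  | _ n ih =>
  intro G _ _ hn hP hR x y
  have S : ∀ H : Subgroup G, H ≠ ⊤ → ∀ x ∈ H, ∀ y ∈ H, x ^ p = y ^ p ↔ (x⁻¹ * y) ^ p = 1 := by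
    intro H hH x hx y hy
    have hlt : Nat.card H < n := by
      rw [← hn]
      refine lt_of_le_of_ne (Subgroup.card_le_card_group H) fun h => hH ?_
      exact Subgroup.eq_top_of_card_eq H h
    have := ih _ hlt H rfl (hP.to_subgroup H) (hR.of_inj H.subtype H.subtype_injective)
      ⟨x, hx⟩ ⟨y, hy⟩
    simpa [Subtype.ext_iff] using this
  by_cases hc : Subgroup.closure {x, y} = ⊤
  · constructor
    · intro h
      have hcen : ∀ g, x ^ p = (g * x * g⁻¹) ^ p := by
        intro g
        have hg : g ∈ Subgroup.closure {x, y} := by rw [hc]; trivial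
        have hle : Subgroup.closure {x, y} ≤ Subgroup.centralizer {x ^ p} := by
          rw [Subgroup.closure_le]
          rintro z (rfl | rfl)
          · simp only [SetLike.mem_coe, Subgroup.mem_centralizer_singleton_iff]
            exact ((Commute.refl z).pow_right p).eq
          · simp only [SetLike.mem_coe, Subgroup.mem_centralizer_singleton_iff, h]
            exact ((Commute.refl z).pow_right p).eq
        have := Subgroup.mem_centralizer_singleton_iff.1 (hle hg)
        rw [conj_pow, this]; group
      have := reg_key_step hP hR S x y hc hcen x⁻¹ y
      rw [← this, ← h, inv_pow, inv_mul_cancel]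
    · intro h
      have hc' : Subgroup.closure {x⁻¹ * y, x} = ⊤ := by
        rw [eq_top_iff, ← hc, Subgroup.closure_le]
        have hx : x ∈ Subgroup.closure {x⁻¹ * y, x} := Subgroup.subset_closure (by simp)
        have hxy : x⁻¹ * y ∈ Subgroup.closure {x⁻¹ * y, x} := Subgroup.subset_closure (by simp)
        rintro z (rfl | rfl)
        · exact hx
        · have := Subgroup.mul_mem _ hx hxy
          simpa using this
      have := reg_key_step hP hR S _ x hc' (fun g => by rw [conj_pow, h]; simp) x (x⁻¹ * y)
      rw [h, mul_one, mul_inv_cancel_left] at this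
      exact this
  · exact S _ hc x (Subgroup.subset_closure (by simp)) y (Subgroup.subset_closure (by simp))

/-- The key property of regular groups. -/
def KProp (p : ℕ) (G : Type) [Group G] : Prop :=
  ∀ (i : ℕ) (x y : G), x ^ p ^ i = y ^ p ^ i ↔ (x⁻¹ * y) ^ p ^ i = 1

theorem reg_kprop_aux (p : ℕ) [Fact p.Prime] (i : ℕ) : ∀ (G : Type) [Group G] [Finite G],
    IsPGroup p G → IsRegularPGroup p G →
    ∀ x y : G, x ^ p ^ i = y ^ p ^ i ↔ (x⁻¹ * y) ^ p ^ i = 1 := by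
  induction i with
  | zero => intro G _ _ _ _ x y; simp [inv_mul_eq_one]
  | succ i ih =>
    intro G _ _ hP hR x y
    have K := reg_key_one p _ G rfl hP hR
    let T : Subgroup G :=
      { carrier := {t | t ^ p = 1}
        one_mem' := one_pow p
        mul_mem' := by
          intro a b ha hb
          have ha' : a ^ p = 1 := ha
          have hb' : b ^ p = 1 := hb
          have := (K a⁻¹ b).1 (by simp [ha', hb'])
          simpa using this
        inv_mem' := by
          intro a ha
          have ha' : a ^ p = 1 := ha
          simp [ha'] }
    have : T.Normal := ⟨by
      intro t ht g
      have ht' : t ^ p = 1 := ht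
      show (g * t * g⁻¹) ^ p = 1
      simp [conj_pow, ht']⟩
    have := ih (G ⧸ T) (hP.to_quotient T)
      (hR.of_surj (QuotientGroup.mk' T) (QuotientGroup.mk'_surjective T)) x y
    rw [← QuotientGroup.mk_pow, ← QuotientGroup.mk_pow, QuotientGroup.eq, ← QuotientGroup.mk_inv,
      ← QuotientGroup.mk_mul, ← QuotientGroup.mk_pow, QuotientGroup.eq_one_iff] at this
    rw [pow_succ, pow_mul, pow_mul, pow_mul, K]
    exact this

theorem reg_kprop {p : ℕ} [Fact p.Prime] {G : Type} [Group G] [Finite G]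
    (hP : IsPGroup p G) (hR : IsRegularPGroup p G) : KProp p G :=
  fun i x y => reg_kprop_aux p i G hP hR x y

/-- `G` is the cyclic extension of `N` by `ℤ/q` given by `(σ, w)`. -/
structure Pres {N G : Type} [Group N] [Group G] (i : N →* G) (a : G) (σ : MulAut N) (w : N)
    (q : ℕ) : Prop where
  inj : Function.Injective i
  conj : ∀ n, a * i n * a⁻¹ = i (σ n)
  pow : a ^ q = i w
  surj : ∀ g, ∃ (j : ℤ) (n : N), g = a ^ j * i n
  dvd : ∀ j : ℤ, a ^ j ∈ i.range → (q : ℤ) ∣ j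

namespace Pres

variable {N G H : Type} [Group N] [Group G] [Group H] {i : N →* G} {a : G} {σ : MulAut N} {w : N}
    {q : ℕ} {k : N →* H} {b : H}

theorem conj_pow_nat (h : Pres i a σ w q) (j : ℕ) (n : N) :
    a ^ j * i n * (a ^ j)⁻¹ = i ((σ ^ j) n) := by
  induction j with
  | zero => simp
  | succ j ih =>
    rw [pow_succ' σ, MulAut.mul_apply, ← h.conj, ← ih, pow_succ']
    group

theorem conj_zpow (h : Pres i a σ w q) (j : ℤ) (n : N) :
    a ^ j * i n * (a ^ j)⁻¹ = i ((σ ^ j) n) := by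
  obtain ⟨j, rfl | rfl⟩ := j.eq_nat_or_neg
  · simpa using h.conj_pow_nat j n
  · have := h.conj_pow_nat j ((σ ^ (-(j : ℤ))) n)
    rw [← MulAut.mul_apply, ← zpow_natCast σ j, ← zpow_add, add_neg_cancel, zpow_zero, MulAut.one_apply] at this
    rw [← this, zpow_neg, zpow_natCast]
    group

theorem comm (h : Pres i a σ w q) (j : ℤ) (n : N) :
    i n * a ^ j = a ^ j * i ((σ ^ (-j)) n) := by
  rw [← h.conj_zpow, zpow_neg]; group

theorem pow_mul (h : Pres i a σ w q) (l : ℤ) : a ^ ((q : ℤ) * l) = i (w ^ l) := by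
  rw [zpow_mul, zpow_natCast, h.pow, map_zpow]

theorem wd (h : Pres i a σ w q) (h' : Pres k b σ w q) (j j' : ℤ) (n n' : N)
    (e : a ^ j * i n = a ^ j' * i n') : b ^ j * k n = b ^ j' * k n' := by
  have e1 : a ^ (j - j') = i (n' * n⁻¹) := by
    have : a ^ (j - j') = (a ^ j')⁻¹ * (a ^ j * i n) * (i n)⁻¹ := by
      rw [zpow_sub]
      have : Commute (a ^ j) (a ^ j')⁻¹ := (Commute.zpow_zpow_self a j j').inv_right
      rw [this.eq]; group
    rw [this, e, map_mul, map_inv]; group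
  obtain ⟨l, hl⟩ := h.dvd (j - j') ⟨_, e1.symm⟩
  rw [hl, h.pow_mul] at e1
  have e2 := h.inj e1
  have e3 := h'.pow_mul l
  rw [← hl, e2] at e3
  have : j = j' + (j - j') := by ring
  rw [this, zpow_add, e3, map_mul, map_inv]; group

theorem mul_form (h : Pres i a σ w q) (j j' : ℤ) (n n' : N) :
    (a ^ j * i n) * (a ^ j' * i n') = a ^ (j + j') * i ((σ ^ (-j')) n * n') := by
  rw [zpow_add, map_mul, mul_assoc, ← mul_assoc (i n), h.comm]; group

theorem glue (h : Pres i a σ w q) (h' : Pres k b σ w q) : Nonempty (G ≃* H) := by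
  choose J n hJ using h.surj
  choose J' n' hJ' using h'.surj
  exact ⟨{
    toFun := fun g => b ^ J g * k (n g)
    invFun := fun g => a ^ J' g * i (n' g)
    left_inv := by
      intro g
      have := h'.wd h _ _ _ _ (hJ' (b ^ J g * k (n g))).symm
      dsimp only
      rw [this, ← hJ]
    right_inv := by
      intro g
      have := h.wd h' _ _ _ _ (hJ (a ^ J' g * i (n' g))).symm
      dsimp only
      rw [this, ← hJ']
    map_mul' := by
      intro x y
      rw [h'.mul_form]
      apply h.wd h'
      rw [← hJ, ← h.mul_form, ← hJ, ← hJ] }⟩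

theorem of_equiv (h : Pres i a σ w q) (f : G ≃* H) :
    Pres (f.toMonoidHom.comp i) (f a) σ w q where
  inj := f.injective.comp h.inj
  conj n := by simp [← h.conj]
  pow := by simp [← h.pow]
  surj g := by
    obtain ⟨j, n, e⟩ := h.surj (f.symm g)
    exact ⟨j, n, by simpa using congrArg f e⟩
  dvd j := by
    rintro ⟨n, e⟩
    refine h.dvd j ⟨n, f.injective ?_⟩
    simpa using e

theorem card (h : Pres i a σ w q) (hq : 0 < q) : Nat.card G = q * Nat.card N := by
  have : Nat.card (Fin q × N) = Nat.card G := by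
    refine Nat.card_eq_of_bijective (fun x : Fin q × N => a ^ ((x.1 : ℕ) : ℤ) * i x.2) ⟨?_, ?_⟩
    · rintro ⟨x, n⟩ ⟨y, n'⟩ e
      dsimp only at e
      have e1 : a ^ ((x : ℕ) - (y : ℕ) : ℤ) ∈ i.range := by
        refine ⟨n' * n⁻¹, ?_⟩
        rw [sub_eq_neg_add, zpow_add, zpow_neg, map_mul, map_inv]
        rw [eq_inv_mul_iff_mul_eq, ← mul_assoc, ← e]; group
      obtain ⟨l, hl⟩ := h.dvd _ e1
      have hxy : (x : ℕ) = y := by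
        have hx := x.2
        have hy := y.2
        have : l = 0 := by
          by_contra hl0
          rcases lt_or_gt_of_ne hl0 with h1 | h1
          · have : (q : ℤ) * l ≤ (q : ℤ) * (-1) := by
              apply mul_le_mul_of_nonneg_left <;> omega
            omega
          · have : (q : ℤ) * 1 ≤ (q : ℤ) * l := by
              apply mul_le_mul_of_nonneg_left <;> omega
            omega
        subst this
        omega
      rw [hxy] at e
      have := h.inj (mul_left_cancel e)
      exact Prod.ext (Fin.ext hxy) this
    · intro g
      obtain ⟨j, n, rfl⟩ := h.surj g
      have h0 := Int.emod_nonneg j (b := (q : ℤ)) (by omega)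
      have h1 := Int.emod_lt_of_pos j (b := (q : ℤ)) (by omega)
      refine ⟨⟨⟨(j % q).toNat, by omega⟩, w ^ (j / q) * n⟩, ?_⟩
      dsimp only
      rw [Int.toNat_of_nonneg h0, map_mul, ← h.pow_mul, ← mul_assoc, ← zpow_add, Int.emod_add_mul_ediv]
  rw [← this, Nat.card_prod, Nat.card_fin]

end Pres

/-- The condition on the data. -/
structure GoodData (p l : ℕ) {N : Type} [Group N] (w : N) : Prop where
  exp : ∀ n : N, n ^ p ^ l = 1
  ord : orderOf w = p ^ l

section tor

variable {N G : Type} [Group N] [Group G] {i : N →* G} {a : G} {σ : MulAut N} {w : N}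
    {p l m : ℕ}

theorem KProp.pow_mul {p : ℕ} {G : Type} [Group G] (K : KProp p G) (r : ℕ) (x y : G)
    (hy : y ^ p ^ r = 1) : (x * y) ^ p ^ r = x ^ p ^ r := by
  refine ((K r x (x * y)).2 ?_).symm
  simpa using hy

theorem pow_one_of_le {G : Type} [Group G] {x : G} {l r : ℕ} (hlr : l ≤ r) (hx : x ^ p ^ l = 1) :
    x ^ p ^ r = 1 := by
  rw [← Nat.add_sub_cancel' hlr, pow_add, pow_mul, hx, one_pow]

theorem pres_pow (K : KProp p G) (hD : GoodData p l w) 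
    {r : ℕ} (hr : l ≤ r) (j : ℤ) (n : N) : (a ^ j * i n) ^ p ^ r = (a ^ p ^ r) ^ j := by
  rw [K.pow_mul, ← zpow_natCast, ← zpow_natCast, ← zpow_mul, ← zpow_mul, mul_comm]
  rw [← map_pow, pow_one_of_le hr (hD.exp n), map_one]

theorem pres_order (_hp : 0 < p) (h : Pres i a σ w (p ^ m)) (hD : GoodData p l w) :
    orderOf a = p ^ (m + l) := by
  refine Nat.dvd_antisymm ?_ ?_
  · rw [orderOf_dvd_iff_pow_eq_one, pow_add, pow_mul, h.pow, ← map_pow, hD.exp, map_one]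
  · have h1 : a ^ ((orderOf a : ℕ) : ℤ) ∈ i.range := ⟨1, by simp [pow_orderOf_eq_one]⟩
    have h2 := h.dvd _ h1
    rw [Int.natCast_dvd_natCast] at h2
    obtain ⟨s, hs⟩ := h2
    have h3 := h.pow_mul (s : ℤ)
    rw [← Nat.cast_mul, ← hs, zpow_natCast, pow_orderOf_eq_one] at h3
    have h4 : w ^ s = 1 := by
      apply h.inj
      rw [map_one, h3]; simp
    rw [hs, pow_add, ← hD.ord]
    exact Nat.mul_dvd_mul_left _ (orderOf_dvd_of_pow_eq_one h4)

theorem pres_tor (hp : 0 < p) (K : KProp p G) (h : Pres i a σ w (p ^ m)) (hD : GoodData p l w)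
    (g : G) : g ^ p ^ l = 1 ↔ g ∈ i.range := by
  constructor
  · intro hg
    obtain ⟨j, n, rfl⟩ := h.surj g
    rw [pres_pow K hD le_rfl, ← zpow_natCast a, ← zpow_mul, ← orderOf_dvd_iff_zpow_eq_one,
      pres_order hp h hD, pow_add, mul_comm, Nat.cast_mul] at hg
    have := Int.dvd_of_mul_dvd_mul_left (by positivity) hg
    obtain ⟨s, rfl⟩ := this
    exact ⟨w ^ s * n, by rw [map_mul, h.pow_mul]⟩
  · rintro ⟨n, rfl⟩
    rw [← map_pow, hD.exp, map_one]

/-- the power map as a homomorphism -/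
def powHom (K : KProp p G) (hD : GoodData p l w) (hs : ∀ g : G, ∃ (j : ℤ) (n : N), g = a ^ j * i n)
    (h : Pres i a σ w (p ^ m)) {r : ℕ} (hr : l ≤ r) : G →* G where
  toFun g := g ^ p ^ r
  map_one' := one_pow _
  map_mul' x y := by
    obtain ⟨j, n, rfl⟩ := hs x
    obtain ⟨j', n', rfl⟩ := hs y
    rw [h.mul_form, pres_pow K hD hr, pres_pow K hD hr, pres_pow K hD hr, zpow_add]

theorem KProp.mem_omega (K : KProp p G) (r : ℕ) (g : G) :
    g ∈ OmegaSubgroup p G r ↔ g ^ p ^ r = 1 := by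
  constructor
  · intro hg
    unfold OmegaSubgroup at hg
    induction hg using Subgroup.closure_induction with
    | mem x hx => exact hx
    | one => exact one_pow _
    | mul x y _ _ hx hy => rw [K.pow_mul r x y hy, hx]
    | inv x _ hx => simp [hx]
  · intro hg
    exact Subgroup.subset_closure hg

theorem pres_index (hp : 0 < p) (K : KProp p G) (h : Pres i a σ w (p ^ m)) (hD : GoodData p l w)
    {r : ℕ} (hr : l ≤ r) : (OmegaSubgroup p G r).index = p ^ (m + l - r) := by
  have hk : OmegaSubgroup p G r = (powHom K hD h.surj h hr).ker := by
    ext g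
    rw [K.mem_omega]; rfl
  have hrange : (powHom K hD h.surj h hr).range = Subgroup.zpowers (a ^ p ^ r) := by
    ext g
    constructor
    · rintro ⟨x, rfl⟩
      obtain ⟨j, n, rfl⟩ := h.surj x
      exact ⟨j, (pres_pow K hD hr j n).symm⟩
    · rintro ⟨j, rfl⟩
      exact ⟨a ^ j * i 1, pres_pow K hD hr j 1⟩
  rw [hk, Subgroup.index_ker, hrange, Nat.card_zpowers, orderOf_pow' _ (by positivity),
    pres_order hp h hD]
  rcases le_total r (m + l) with h1 | h1
  · rw [Nat.gcd_eq_right (pow_dvd_pow p h1), Nat.pow_div h1 hp]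
  · rw [Nat.gcd_eq_left (pow_dvd_pow p h1), Nat.div_self (by positivity)]
    simp [h1]

end tor

section types

variable {N G G' : Type} [Group N] [Group G] [Group G'] {i : N →* G} {a : G} {σ : MulAut N} {w : N}
    {i' : N →* G'} {a' : G'}
    {p l m m' : ℕ}

theorem omega_mono {r s : ℕ} (h : r ≤ s) : OmegaSubgroup p G r ≤ OmegaSubgroup p G s := by
  unfold OmegaSubgroup
  apply Subgroup.closure_mono
  intro x hx
  exact pow_one_of_le h hx

theorem omega_map (hp : 0 < p) (K : KProp p G) (h : Pres i a σ w (p ^ m)) (hD : GoodData p l w)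
    {r : ℕ} (hr : r ≤ l) : OmegaSubgroup p G r = (OmegaSubgroup p N r).map i := by
  unfold OmegaSubgroup
  rw [MonoidHom.map_closure]
  congr 1
  ext x
  constructor
  · intro hx
    have hx' : x ^ p ^ r = 1 := hx
    obtain ⟨n, rfl⟩ := (pres_tor hp K h hD x).1 (pow_one_of_le hr hx')
    refine ⟨n, h.inj ?_, rfl⟩
    rw [map_pow, hx', map_one]
  · rintro ⟨n, hn, rfl⟩
    have hn' : n ^ p ^ r = 1 := hn
    show (i n) ^ p ^ r = 1
    rw [← map_pow, hn', map_one]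

theorem omegaInv_le (hp : 0 < p) (K : KProp p G) (h : Pres i a σ w (p ^ m)) (hD : GoodData p l w)
    {r : ℕ} (hr : r ≤ l) : omegaInv p G r = omegaInv p N r := by
  unfold omegaInv
  rw [omega_map hp K h hD hr, omega_map hp K h hD (show r - 1 ≤ l by omega),
    Subgroup.relIndex_map_map_of_injective _ _ h.inj]

theorem omegaInv_mid (hp : p.Prime) (K : KProp p G) (h : Pres i a σ w (p ^ m))
    (hD : GoodData p l w) {r : ℕ} (hr : l < r) (hr' : r ≤ m + l) : omegaInv p G r = 1 := by
  unfold omegaInv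
  have h1 := Subgroup.relIndex_mul_index (omega_mono (p := p) (G := G) (show r - 1 ≤ r by omega))
  rw [pres_index hp.pos K h hD hr.le, pres_index hp.pos K h hD (show l ≤ r - 1 by omega),
    show m + l - (r - 1) = (m + l - r) + 1 by omega, pow_succ, mul_comm] at h1
  have := Nat.eq_of_mul_eq_mul_left (pow_pos hp.pos _) h1
  rw [this, hp.factorization_self]

theorem omegaInv_top (hp : p.Prime) (K : KProp p G) (h : Pres i a σ w (p ^ m))
    (hD : GoodData p l w) {r : ℕ} (hr : l < r) (hr' : m + l < r) : omegaInv p G r = 0 := by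
  unfold omegaInv
  have h1 := Subgroup.relIndex_mul_index (omega_mono (p := p) (G := G) (show r - 1 ≤ r by omega))
  rw [pres_index hp.pos K h hD hr.le, pres_index hp.pos K h hD (show l ≤ r - 1 by omega),
    show m + l - (r - 1) = 0 by omega, show m + l - r = 0 by omega] at h1
  rw [pow_zero, mul_one] at h1
  rw [h1, Nat.factorization_one]; rfl

theorem type_transfer (hp : p.Prime) (K : KProp p G) (h : Pres i a σ w (p ^ m))
    (K' : KProp p G') (h' : Pres i' a' σ w (p ^ m')) (hD : GoodData p l w) (rest : List ℕ)
    (hT : HasTypeInvariants p G ((m + l) :: rest)) :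
    HasTypeInvariants p G' ((m' + l) :: rest) := by
  have hpos : ∀ r, 1 ≤ r → r ≤ l → 1 ≤ omegaInv p N r := by
    have h0 := hT 0
    simp only [muInv, List.getD_cons_zero, zero_add] at h0
    have h1 : {r : ℕ | 1 ≤ r ∧ 1 ≤ omegaInv p G r}.ncard = m + l := h0
    have hsub : {r : ℕ | 1 ≤ r ∧ 1 ≤ omegaInv p G r} ⊆ Set.Icc 1 (m + l) := by
      rintro r ⟨hr, hr2⟩
      refine ⟨hr, ?_⟩
      by_contra hc
      rw [omegaInv_top hp K h hD (by omega) (by omega)] at hr2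
      omega
    have heq := Set.eq_of_subset_of_ncard_le hsub (by
      rw [h1, Set.ncard_eq_toFinset_card']; simp) (Set.finite_Icc _ _)
    intro r hr hrl
    have : r ∈ Set.Icc 1 (m + l) := ⟨hr, by omega⟩
    rw [← heq] at this
    rw [← omegaInv_le hp.pos K h hD hrl]
    exact this.2
  intro j
  rcases j with _ | j
  · simp only [muInv, List.getD_cons_zero, zero_add]
    show {r : ℕ | 1 ≤ r ∧ 1 ≤ omegaInv p G' r}.ncard = m' + l
    have : {r : ℕ | 1 ≤ r ∧ 1 ≤ omegaInv p G' r} = Set.Icc 1 (m' + l) := by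
      ext r
      simp only [Set.mem_ofPred_eq, Set.mem_Icc]
      refine and_congr_right fun hr => ?_
      constructor
      · intro hr2
        by_contra hc
        rw [omegaInv_top hp K' h' hD (by omega) (by omega)] at hr2
        omega
      · intro hr2
        by_cases hrl : r ≤ l
        · rw [omegaInv_le hp.pos K' h' hD hrl]
          exact hpos r hr hrl
        · rw [omegaInv_mid hp K' h' hD (by omega) hr2]
    rw [this, Set.ncard_eq_toFinset_card']; simp
  · have h0 := hT (j + 1)
    rw [List.getD_cons_succ] at h0 ⊢
    rw [← h0]
    unfold muInv
    refine Nat.card_congr (Equiv.subtypeEquivRight fun r => and_congr_right fun hr1 => ?_)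
    by_cases hrl : r ≤ l
    · rw [omegaInv_le hp.pos K' h' hD hrl, omegaInv_le hp.pos K h hD hrl]
    · have h1 : omegaInv p G r ≤ 1 := by
        by_cases h2 : r ≤ m + l
        · rw [omegaInv_mid hp K h hD (by omega) h2]
        · rw [omegaInv_top hp K h hD (by omega) (by omega)]; omega
      have h1' : omegaInv p G' r ≤ 1 := by
        by_cases h2 : r ≤ m' + l
        · rw [omegaInv_mid hp K' h' hD (by omega) h2]
        · rw [omegaInv_top hp K' h' hD (by omega) (by omega)]; omega
      omega

theorem downset_count (P : ℕ → Prop) (hP : ∀ r, 1 ≤ r → P (r + 1) → P r) (c : ℕ) (hc : 0 < c)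
    (h : Nat.card {r : ℕ // 1 ≤ r ∧ P r} = c) (r : ℕ) (hr : 1 ≤ r) : P r ↔ r ≤ c := by
  have h1 : {r : ℕ | 1 ≤ r ∧ P r}.ncard = c := h
  have hfin : {r : ℕ | 1 ≤ r ∧ P r}.Finite := Set.finite_of_ncard_pos (by omega)
  have hdown : ∀ d s, 1 ≤ s → P (s + d) → P s := by
    intro d
    induction d with
    | zero => intro s _ h; exact h
    | succ d ih =>
      intro s hs h
      exact hP s hs (ih (s + 1) (by omega) (by rwa [show s + 1 + d = s + (d + 1) by ring]))
  constructor
  · intro hPr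
    have hsub : Set.Icc 1 r ⊆ {r : ℕ | 1 ≤ r ∧ P r} := by
      rintro s ⟨hs1, hs2⟩
      exact ⟨hs1, hdown (r - s) s hs1 (by rwa [Nat.add_sub_cancel' hs2])⟩
    have := Set.ncard_le_ncard hsub hfin
    rw [h1, Set.ncard_eq_toFinset_card'] at this
    simpa using this
  · intro hrc
    by_contra hPr
    have hsub : {r : ℕ | 1 ≤ r ∧ P r} ⊆ Set.Icc 1 (r - 1) := by
      rintro s ⟨hs1, hs2⟩
      refine ⟨hs1, ?_⟩
      by_contra hlt
      exact hPr (hdown (s - r) r hr (by rwa [Nat.add_sub_cancel' (by omega)]))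
    have := Set.ncard_le_ncard hsub (Set.finite_Icc _ _)
    rw [h1, Set.ncard_eq_toFinset_card'] at this
    simp at this
    omega

theorem relIndex_omega [Fact p.Prime] [Finite G] (hP : IsPGroup p G) (r : ℕ) :
    (OmegaSubgroup p G (r - 1)).relIndex (OmegaSubgroup p G r) = p ^ omegaInv p G r := by
  obtain ⟨n, hn⟩ := (hP.to_subgroup (OmegaSubgroup p G r)).index
    ((OmegaSubgroup p G (r - 1)).subgroupOf (OmegaSubgroup p G r))
  have hn' : (OmegaSubgroup p G (r - 1)).relIndex (OmegaSubgroup p G r) = p ^ n := hn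
  unfold omegaInv
  rw [hn', (Fact.out : p.Prime).factorization_pow]
  simp

theorem omegaInv_anti [Fact p.Prime] [Finite G] (hP : IsPGroup p G) (K : KProp p G) (r : ℕ)
    (hr : 1 ≤ r) : omegaInv p G (r + 1) ≤ omegaInv p G r := by
  obtain ⟨r, rfl⟩ : ∃ s, r = s + 1 := ⟨r - 1, by omega⟩
  have hp : p.Prime := Fact.out
  rw [← Nat.pow_le_pow_iff_right hp.one_lt, ← relIndex_omega hP, ← relIndex_omega hP]
  have key : ∀ (s : ℕ) (x y : G), x⁻¹ * y ∈ OmegaSubgroup p G (s + 1) ↔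
      (x ^ p)⁻¹ * y ^ p ∈ OmegaSubgroup p G s := by
    intro s x y
    rw [K.mem_omega, K.mem_omega, ← K, ← K, pow_succ', pow_mul, pow_mul]
  have hmem : ∀ x : OmegaSubgroup p G (r + 1 + 1), (x : G) ^ p ∈ OmegaSubgroup p G (r + 1) := by
    intro x
    have := (key (r + 1) 1 x).1 (by simp)
    simpa using this
  refine Nat.card_le_card_of_injective
    (Quotient.map' (fun x => ⟨(x : G) ^ p, hmem x⟩) ?_) ?_
  · intro x y hxy
    rw [QuotientGroup.leftRel_apply] at hxy ⊢
    exact (key r x y).1 hxy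
  · intro x y
    induction x using Quotient.inductionOn'
    induction y using Quotient.inductionOn'
    rename_i x y
    intro hxy
    simp only [Quotient.map'_mk''] at hxy
    rw [Quotient.eq'', QuotientGroup.leftRel_apply] at hxy
    apply Quotient.sound'
    rw [QuotientGroup.leftRel_apply]
    exact (key r x y).2 hxy

theorem omega_normal (K : KProp p G) (r : ℕ) : (OmegaSubgroup p G r).Normal := ⟨by
  intro t ht g
  rw [K.mem_omega] at *
  rw [conj_pow, ht]; simp⟩

theorem index_omega_top [Fact p.Prime] [Finite G] (hP : IsPGroup p G) (K : KProp p G) (e : ℕ)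
    (h0 : ∀ r, e < r → omegaInv p G r = 0) : (OmegaSubgroup p G e).index = 1 := by
  have h1 : ∀ d, (OmegaSubgroup p G e).index = (OmegaSubgroup p G (e + d)).index := by
    intro d
    induction d with
    | zero => rfl
    | succ d ih =>
      rw [ih, ← Subgroup.relIndex_mul_index
        (omega_mono (p := p) (G := G) (show e + d ≤ e + (d + 1) by omega))]
      have := relIndex_omega (G := G) hP (e + (d + 1))
      rw [h0 _ (by omega), show e + (d + 1) - 1 = e + d by omega, pow_zero] at this
      rw [this, one_mul]
  obtain ⟨R, hR⟩ := IsPGroup.iff_card.1 hP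
  rw [h1 R]
  have : OmegaSubgroup p G (e + R) = ⊤ := by
    rw [eq_top_iff]
    intro g _
    rw [K.mem_omega]
    apply pow_one_of_le (show R ≤ e + R by omega)
    rw [← hR]; exact pow_card_eq_one'
  rw [this, Subgroup.index_top]

theorem extract [Fact p.Prime] [Finite G] (hP : IsPGroup p G) (K : KProp p G) (e : ℕ)
    (hl : 1 ≤ l) (hle : l < e) (rest : List ℕ) (hT : HasTypeInvariants p G (e :: l :: rest)) :
    ∃ (a : G) (σ : MulAut (OmegaSubgroup p G l)) (w : OmegaSubgroup p G l),
      Pres (OmegaSubgroup p G l).subtype a σ w (p ^ (e - l)) ∧ GoodData p l w := by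
  have hp : p.Prime := Fact.out
  have h1 := downset_count (fun r => 1 ≤ omegaInv p G r)
    (fun r hr h => le_trans h (omegaInv_anti hP K r hr)) e (by omega) (hT 0)
  have h2 := downset_count (fun r => 2 ≤ omegaInv p G r)
    (fun r hr h => le_trans h (omegaInv_anti hP K r hr)) l (by omega) (hT 1)
  have hmid : ∀ r, l < r → r ≤ e → omegaInv p G r = 1 := by
    intro r hr hr'
    have := (h1 r (by omega)).2 hr'
    have := (h2 r (by omega)).not.2 (by omega)
    omega
  have htop : ∀ r, e < r → omegaInv p G r = 0 := by
    intro r hr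
    have := (h1 r (by omega)).not.2 (by omega)
    omega
  have hidx : ∀ d, d ≤ e - l → (OmegaSubgroup p G (e - d)).index = p ^ d := by
    intro d
    induction d with
    | zero => intro _; simpa using index_omega_top hP K e htop
    | succ d ih =>
      intro hd
      rw [← Subgroup.relIndex_mul_index
        (omega_mono (p := p) (G := G) (show e - (d + 1) ≤ e - d by omega)), ih (by omega)]
      have := relIndex_omega (G := G) hP (e - d)
      rw [hmid _ (by omega) (by omega), show e - d - 1 = e - (d + 1) by omega] at this
      rw [this]; ring
  have hidxl : (OmegaSubgroup p G l).index = p ^ (e - l) := by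
    have := hidx (e - l) le_rfl
    rwa [show e - (e - l) = l by omega] at this
  obtain ⟨x, hx1, hx2⟩ : ∃ x : G, x ^ p ^ e = 1 ∧ ¬ x ^ p ^ (e - 1) = 1 := by
    have h3 := relIndex_omega (G := G) hP e
    rw [hmid e hle le_rfl, pow_one] at h3
    have h4 : ¬ OmegaSubgroup p G e ≤ OmegaSubgroup p G (e - 1) := by
      rw [← Subgroup.relIndex_eq_one, h3]
      exact hp.one_lt.ne'
    obtain ⟨x, hx, hx'⟩ := SetLike.not_le_iff_exists.1 h4
    rw [K.mem_omega] at hx hx'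
    exact ⟨x, hx, hx'⟩
  have hord : orderOf x = p ^ e := by
    have := orderOf_eq_prime_pow (p := p) (n := e - 1) hx2 (by rwa [Nat.sub_add_cancel (by omega)])
    rwa [Nat.sub_add_cancel (by omega)] at this
  have hnorm := omega_normal (G := G) K l
  have hsplit : p ^ e = p ^ l * p ^ (e - l) := by rw [← pow_add, Nat.add_sub_cancel' hle.le]
  have hdvd : ∀ j : ℤ, x ^ j ∈ OmegaSubgroup p G l ↔ ((p ^ (e - l) : ℕ) : ℤ) ∣ j := by
    intro j
    rw [K.mem_omega, ← zpow_natCast, ← zpow_mul, ← orderOf_dvd_iff_zpow_eq_one, hord, hsplit,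
      mul_comm j, Nat.cast_mul]
    have : ((p ^ l : ℕ) : ℤ) ≠ 0 := by
      have := hp.pos
      positivity
    exact mul_dvd_mul_iff_left this
  have hw : x ^ p ^ (e - l) ∈ OmegaSubgroup p G l := by
    have := (hdvd ((p ^ (e - l) : ℕ) : ℤ)).2 dvd_rfl
    rwa [zpow_natCast] at this
  have hgen : Subgroup.zpowers (x : G ⧸ OmegaSubgroup p G l) = ⊤ := by
    apply Subgroup.eq_top_of_card_eq
    rw [Nat.card_zpowers]
    have : Nat.card (G ⧸ OmegaSubgroup p G l) = p ^ (e - l) := hidxl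
    rw [this]
    apply Nat.dvd_antisymm
    · rw [orderOf_dvd_iff_pow_eq_one, ← QuotientGroup.mk_pow, QuotientGroup.eq_one_iff]
      exact hw
    · rw [← Int.natCast_dvd_natCast, ← hdvd, zpow_natCast, ← QuotientGroup.eq_one_iff,
        QuotientGroup.mk_pow, pow_orderOf_eq_one]
  refine ⟨x, MulAut.conjNormal x, ⟨_, hw⟩, ⟨Subgroup.subtype_injective _, ?_, rfl, ?_, ?_⟩, ?_, ?_⟩
  · intro n
    simp
  · intro g
    have : (g : G ⧸ OmegaSubgroup p G l) ∈ Subgroup.zpowers (x : G ⧸ OmegaSubgroup p G l) := by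
      rw [hgen]; trivial
    obtain ⟨j, hj⟩ := this
    have hj' : ((x ^ j : G) : G ⧸ OmegaSubgroup p G l) = g := hj
    exact ⟨j, ⟨_, QuotientGroup.eq.1 hj'⟩, by simp⟩
  · intro j hj
    rw [← hdvd]
    simpa using hj
  · intro n
    apply Subtype.ext
    exact (K.mem_omega l n).1 n.2
  · rw [Subgroup.orderOf_mk, orderOf_pow' _ (pow_pos hp.pos _).ne', hord,
      Nat.gcd_eq_right (pow_dvd_pow p (by omega)), Nat.pow_div (by omega) hp.pos]
    congr 1
    omega

end types

/-- `G` and `G'` come from the same data. -/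
def PRel (p l m m' : ℕ) (G G' : Type) [Group G] [Group G'] : Prop :=
  ∃ (N : Type) (_ : Group N) (i : N →* G) (i' : N →* G') (a : G) (a' : G') (σ : MulAut N) (w : N),
    Pres i a σ w (p ^ m) ∧ Pres i' a' σ w (p ^ m') ∧ GoodData p l w

theorem PRel.symm {p l m m' : ℕ} {G G' : Type} [Group G] [Group G'] (h : PRel p l m m' G G') :
    PRel p l m' m G' G := by
  obtain ⟨N, _, i, i', a, a', σ, w, h1, h2, h3⟩ := h
  exact ⟨N, _, i', i, a', a, σ, w, h2, h1, h3⟩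

theorem PRel.iso {p l m m' : ℕ} (hp : p.Prime) (hm : l ≤ m) (hm' : l ≤ m') (hl : 1 ≤ l)
    {G G' H H' : Type} [Group G] [Group G'] [Group H] [Group H']
    (KG : KProp p G) (KH : KProp p H) (KH' : KProp p H')
    (h : PRel p l m m' G G') (k : PRel p l m m' H H') (φ : G ≃* H) : Nonempty (G' ≃* H') := by
  obtain ⟨N, _, i, i', a, a', σ, w, h1, h2, hD⟩ := h
  obtain ⟨M, _, κ, κ', b, b', τ, v, k1, k2, kD⟩ := k
  have hex : ∀ n : N, ∃ x : M, κ x = φ (i n) := by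
    intro n
    have : φ (i n) ∈ κ.range := by
      rw [← pres_tor hp.pos KH k1 kD, ← map_pow, ← map_pow, hD.exp, map_one, map_one]
    exact this
  choose f hf using hex
  let F : N →* M := MonoidHom.mk' f (fun x y => k1.inj (by simp [hf]))
  have hF : ∀ n, κ (F n) = φ (i n) := hf
  have Finj : Function.Injective F := by
    intro x y hxy
    apply h1.inj
    apply φ.injective
    rw [← hF, ← hF, hxy]
  have Fsurj : Function.Surjective F := by
    intro y
    have : φ.symm (κ y) ∈ i.range := by
      rw [← pres_tor hp.pos KG h1 hD, ← map_pow, ← map_pow, kD.exp, map_one, map_one]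
    obtain ⟨n, hn⟩ := this
    refine ⟨n, k1.inj ?_⟩
    rw [hF, hn]; simp
  obtain ⟨u, ω, hu⟩ := k1.surj (φ a)
  have hconj : ∀ n, (τ ^ u) (ω * F n * ω⁻¹) = F (σ n) := by
    intro n
    apply k1.inj
    have e1 : φ (i (σ n)) = φ a * φ (i n) * (φ a)⁻¹ := by
      rw [← h1.conj, map_mul φ, map_mul φ, map_inv φ]
    rw [hF, e1, hu, ← hF, ← k1.conj_zpow, map_mul κ, map_mul κ, map_inv κ]
    group
  have hw : F w = v ^ u := by
    apply k1.inj
    have e1 : (b ^ p ^ m) ^ u = κ (v ^ u) := by rw [k1.pow, map_zpow]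
    rw [hF, ← h1.pow, map_pow, hu, pres_pow KH kD hm, e1]
  have hcop : IsCoprime u ((p ^ m' : ℕ) : ℤ) := by
    have : IsCoprime u ((p ^ m : ℕ) : ℤ) := by
      obtain ⟨s, n, hs⟩ := h1.surj (φ.symm b)
      have hs' : b = (φ a) ^ s * κ (F n) := by
        rw [hF, ← map_zpow, ← map_mul, ← hs]; simp
      have hbs : ∃ y : M, (φ a) ^ s = b ^ (u * s) * κ y := by
        have hnat : ∀ t : ℤ, ∃ y : M, (φ a) ^ t = b ^ (u * t) * κ y := by
          intro t
          induction t using Int.induction_on with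
          | zero => exact ⟨1, by simp⟩
          | succ t ih =>
            obtain ⟨y, hy⟩ := ih
            refine ⟨(τ ^ (-u)) y * ω, ?_⟩
            rw [zpow_add, hy, zpow_one, hu, k1.mul_form]
            ring_nf
          | pred t ih =>
            obtain ⟨y, hy⟩ := ih
            refine ⟨(τ ^ u) (y * ω⁻¹), ?_⟩
            have : (φ a)⁻¹ = b ^ (-u) * κ ((τ ^ u) (ω⁻¹)) := by
              rw [hu, mul_inv_rev, ← map_inv, ← zpow_neg, k1.comm]
              simp
            rw [zpow_sub, hy, zpow_one, this, k1.mul_form]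
            simp only [neg_neg, map_mul]
            ring_nf
        exact hnat s
      obtain ⟨y, hy⟩ := hbs
      have hmem : b ^ (1 - u * s) ∈ κ.range := by
        have : b ^ (1 - u * s) = κ (y * F n) := by
          rw [sub_eq_neg_add, zpow_add, zpow_one, map_mul]
          nth_rw 2 [hs']
          rw [hy, zpow_neg]; group
        rw [this]; exact ⟨_, rfl⟩
      obtain ⟨t, ht⟩ := k1.dvd _ hmem
      exact ⟨s, t, by linarith⟩
    have hpm : IsCoprime u (p : ℤ) := by
      rw [Nat.cast_pow] at this
      exact (IsCoprime.pow_right_iff (by omega)).1 this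
    rw [Nat.cast_pow]
    exact hpm.pow_right
  set c := b' ^ u * κ' ω with hc
  have hcpow : ∀ t : ℤ, ∃ y : M, c ^ t = b' ^ (u * t) * κ' y := by
    intro t
    induction t using Int.induction_on with
    | zero => exact ⟨1, by simp⟩
    | succ t ih =>
      obtain ⟨y, hy⟩ := ih
      refine ⟨(τ ^ (-u)) y * ω, ?_⟩
      rw [zpow_add, hy, zpow_one, hc, k2.mul_form]
      ring_nf
    | pred t ih =>
      obtain ⟨y, hy⟩ := ih
      refine ⟨(τ ^ u) (y * ω⁻¹), ?_⟩
      have : c⁻¹ = b' ^ (-u) * κ' ((τ ^ u) (ω⁻¹)) := by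
        rw [hc, mul_inv_rev, ← map_inv, ← zpow_neg, k2.comm]
        simp
      rw [zpow_sub, hy, zpow_one, this, k2.mul_form]
      simp only [neg_neg, map_mul]
      ring_nf
  have hP : Pres (κ'.comp F) c σ w (p ^ m') := by
    refine ⟨k2.inj.comp Finj, ?_, ?_, ?_, ?_⟩
    · intro n
      simp only [MonoidHom.comp_apply]
      rw [← hconj, ← k2.conj_zpow, hc]
      simp only [map_mul, map_inv]
      group
    · rw [hc, pres_pow KH' kD hm', k2.pow, MonoidHom.comp_apply, hw, map_zpow]
    · intro g
      obtain ⟨s, y, rfl⟩ := k2.surj g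
      obtain ⟨x1, x2, hx⟩ := hcop
      obtain ⟨y', hy'⟩ := hcpow (x1 * s)
      obtain ⟨n, hn⟩ := Fsurj (y'⁻¹ * v ^ (x2 * s) * y)
      refine ⟨x1 * s, n, ?_⟩
      rw [MonoidHom.comp_apply, hn, hy', map_mul, map_mul, ← k2.pow_mul, map_inv]
      have : s = u * (x1 * s) + ((p ^ m' : ℕ) : ℤ) * (x2 * s) := by
        linear_combination (-s) * hx
      nth_rw 1 [this]
      rw [zpow_add]; group
    · rintro j ⟨n, hn⟩
      obtain ⟨y, hy⟩ := hcpow j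
      have : b' ^ (u * j) ∈ κ'.range := by
        refine ⟨F n * y⁻¹, ?_⟩
        rw [MonoidHom.comp_apply, hy] at hn
        rw [map_mul, hn, map_inv]; group
      exact hcop.symm.dvd_of_dvd_mul_left (k2.dvd _ this)
  exact h2.glue hP

theorem pres_central {N G : Type} [Group N] [Group G] {i : N →* G} {a : G} {σ : MulAut N} {w : N}
    {p l q : ℕ} (K : KProp p G) (h : Pres i a σ w q) (hD : GoodData p l w) {r : ℕ} (hr : l ≤ r)
    (g : G) : Commute (a ^ p ^ r) g := by
  obtain ⟨j, n, rfl⟩ := h.surj g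
  refine Commute.mul_right ((Commute.refl a).pow_left _ |>.zpow_right j) ?_
  have h1 : i n * a * (i n)⁻¹ = a ^ (1 : ℤ) * i ((σ ^ (-1 : ℤ)) n * n⁻¹) := by
    rw [map_mul, map_inv, ← mul_assoc, ← h.comm, zpow_one]
  have h2 := congrArg (· ^ p ^ r) h1
  simp only [conj_pow] at h2
  rw [pres_pow K hD hr, zpow_one] at h2
  show _ = _
  nth_rw 1 [← h2]; group

section realize

variable {N G : Type} [Group N] [Group G] {i : N →* G} {a : G} {σ : MulAut N} {w : N} {q : ℕ}

/-- the fibre product -/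
def fibre (h : Pres i a σ w q) : Subgroup (G × Multiplicative ℤ) where
  carrier := {x | ∃ n, x.1 = a ^ (Multiplicative.toAdd x.2) * i n}
  one_mem' := ⟨1, by simp⟩
  mul_mem' := by
    rintro x y ⟨n, hn⟩ ⟨n', hn'⟩
    refine ⟨(σ ^ (-(Multiplicative.toAdd y.2))) n * n', ?_⟩
    rw [Prod.fst_mul, hn, hn', h.mul_form]; rfl
  inv_mem' := by
    rintro x ⟨n, hn⟩
    refine ⟨(σ ^ (-(-(Multiplicative.toAdd x.2)))) n⁻¹, ?_⟩
    rw [Prod.fst_inv, hn, mul_inv_rev, ← map_inv, ← zpow_neg, h.comm]; rfl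

/-- elements of the fibre product -/
def fibreMk (h : Pres i a σ w q) (j : ℤ) (n : N) : fibre h :=
  ⟨(a ^ j * i n, Multiplicative.ofAdd j), ⟨n, rfl⟩⟩

theorem fibreMk_mul (h : Pres i a σ w q) (j j' : ℤ) (n n' : N) :
    fibreMk h j n * fibreMk h j' n' = fibreMk h (j + j') ((σ ^ (-j')) n * n') :=
  Subtype.ext (Prod.ext (h.mul_form j j' n n') rfl)

theorem fibreMk_inj (h : Pres i a σ w q) {j j' : ℤ} {n n' : N}
    (e : fibreMk h j n = fibreMk h j' n') : j = j' ∧ n = n' := by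
  have h1 : (a ^ j * i n, Multiplicative.ofAdd j) = (a ^ j' * i n', Multiplicative.ofAdd j') :=
    congrArg Subtype.val e
  have h2 : j = j' := congrArg (fun x : G × Multiplicative ℤ => Multiplicative.toAdd x.2) h1
  subst h2
  exact ⟨rfl, h.inj (mul_left_cancel (congrArg Prod.fst h1))⟩

theorem fibreMk_surj (h : Pres i a σ w q) (x : fibre h) : ∃ j n, x = fibreMk h j n := by
  obtain ⟨⟨g, z⟩, n, hn⟩ := x
  exact ⟨Multiplicative.toAdd z, n, Subtype.ext (Prod.ext hn rfl)⟩

theorem fibreMk_zpow (h : Pres i a σ w q) (j : ℤ) : (fibreMk h 1 1) ^ j = fibreMk h j 1 := by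
  apply Subtype.ext
  rw [Subgroup.coe_zpow]
  apply Prod.ext
  · simp [fibreMk]
  · show (Multiplicative.ofAdd (1 : ℤ)) ^ j = Multiplicative.ofAdd j
    rw [← ofAdd_zsmul]; simp

theorem realize {p l m m' : ℕ} (hp : p.Prime) (K : KProp p G) (hR : IsRegularPGroup p G)
    (h : Pres i a σ w (p ^ m)) (hD : GoodData p l w) (hm : l ≤ m) (hm' : l ≤ m') :
    ∃ (Q : Type) (_ : Group Q) (i' : N →* Q) (a' : Q), Pres i' a' σ w (p ^ m') ∧
      IsRegularPGroup p Q := by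
  have hσ : ∀ r, l ≤ r → ∀ n, (σ ^ ((p ^ r : ℕ) : ℤ)) n = n := by
    intro r hr n
    apply h.inj
    rw [← h.conj_zpow, zpow_natCast, (pres_central K h hD hr (i n)).eq]; group
  have hwc : ∀ n, w * n = n * w := by
    intro n
    apply h.inj
    rw [map_mul, map_mul, ← h.pow]
    exact (pres_central K h hD hm (i n)).eq
  have hσw : ∀ j : ℤ, (σ ^ j) w = w := by
    intro j
    apply h.inj
    rw [← h.conj_zpow, ← h.pow, ← (pres_central K h hD hm (a ^ j)).eq]; group
  have hσ' : ∀ n, (σ ^ (-((p ^ m' : ℕ) : ℤ))) n = n := by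
    intro n
    have := hσ m' hm' ((σ ^ (-((p ^ m' : ℕ) : ℤ))) n)
    rw [← MulAut.mul_apply, ← zpow_add, add_neg_cancel, zpow_zero, MulAut.one_apply] at this
    exact this.symm
  set c : fibre h := fibreMk h ((p ^ m' : ℕ) : ℤ) w⁻¹ with hc
  have hcc : ∀ x : fibre h, x * c = c * x := by
    intro x
    obtain ⟨j, n, rfl⟩ := fibreMk_surj h x
    rw [hc, fibreMk_mul, fibreMk_mul, hσ', map_inv, hσw, add_comm]
    congr 1
    rw [eq_inv_mul_iff_mul_eq, ← mul_assoc, hwc]; group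
  have hcpow : ∀ t : ℤ, c ^ t = fibreMk h ((p ^ m' : ℕ) * t) (w ^ (-t)) := by
    intro t
    induction t using Int.induction_on with
    | zero =>
      have := fibreMk_zpow h 0
      rw [zpow_zero] at this
      simpa using this
    | succ t ih =>
      rw [zpow_add, ih, zpow_one, hc, fibreMk_mul, hσ']
      have e1 : w ^ (-((t : ℤ) + 1)) = w ^ (-(t : ℤ)) * w⁻¹ := by group
      have e2 : w ^ (-(-(t : ℤ))) = w ^ (-(-(t : ℤ) - 1)) * w⁻¹ := by group
      first | rw [e1] | rw [e2]
      congr 1 <;> ring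
    | pred t ih =>
      rw [zpow_sub, ih, zpow_one, mul_inv_eq_iff_eq_mul, hc, fibreMk_mul, hσ']
      have e1 : w ^ (-((t : ℤ) + 1)) = w ^ (-(t : ℤ)) * w⁻¹ := by group
      have e2 : w ^ (-(-(t : ℤ))) = w ^ (-(-(t : ℤ) - 1)) * w⁻¹ := by group
      first | rw [e1] | rw [e2]
      congr 1 <;> ring
  have hnorm : (Subgroup.zpowers c).Normal := ⟨by
    rintro _ ⟨t, rfl⟩ g
    refine ⟨t, ?_⟩
    have : Commute g (c ^ t) := (show Commute g c from hcc g).zpow_right t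
    show c ^ t = g * c ^ t * g⁻¹
    rw [this.eq]; group⟩
  have hone : fibreMk h 0 1 = 1 := by
    have := fibreMk_zpow h 0
    rw [zpow_zero] at this
    exact this.symm
  let i0 : N →* fibre h := MonoidHom.mk' (fun n => fibreMk h 0 n) (by
    intro x y
    rw [fibreMk_mul]; simp)
  let π := QuotientGroup.mk' (Subgroup.zpowers c)
  have hinv : ∀ j, (fibreMk h j 1)⁻¹ = fibreMk h (-j) 1 := by
    intro j
    rw [← fibreMk_zpow h j, ← fibreMk_zpow h (-j), zpow_neg]
  have hpq : ((p ^ m' : ℕ) : ℤ) ≠ 0 := by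
    have := hp.pos
    positivity
  refine ⟨fibre h ⧸ Subgroup.zpowers c, inferInstance, π.comp i0, π (fibreMk h 1 1),
    ⟨?_, ?_, ?_, ?_, ?_⟩, ?_⟩
  · rw [injective_iff_map_eq_one]
    intro n hn
    have h1 : fibreMk h 0 n ∈ Subgroup.zpowers c := (QuotientGroup.eq_one_iff _).1 hn
    obtain ⟨t, ht⟩ := h1
    have ht' : c ^ t = fibreMk h 0 n := ht
    rw [hcpow] at ht'
    obtain ⟨e1, e2⟩ := fibreMk_inj h ht'
    have : t = 0 := by simpa [hpq, hp.ne_zero] using e1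
    rw [← e2, this]; simp
  · intro n
    show π (fibreMk h 1 1) * π (fibreMk h 0 n) * (π (fibreMk h 1 1))⁻¹ = π (fibreMk h 0 (σ n))
    rw [← map_mul, ← map_inv, ← map_mul, hinv, fibreMk_mul, fibreMk_mul]
    simp
  · show (π (fibreMk h 1 1)) ^ p ^ m' = π (fibreMk h 0 w)
    rw [← map_pow, ← zpow_natCast, fibreMk_zpow]
    refine (QuotientGroup.eq).2 ⟨-1, ?_⟩
    show c ^ (-1 : ℤ) = _
    rw [hcpow, hinv, fibreMk_mul]
    simp
  · intro g
    obtain ⟨x, rfl⟩ := QuotientGroup.mk'_surjective _ g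
    obtain ⟨j, n, rfl⟩ := fibreMk_surj h x
    refine ⟨j, n, ?_⟩
    show π (fibreMk h j n) = (π (fibreMk h 1 1)) ^ j * π (fibreMk h 0 n)
    rw [← map_zpow, ← map_mul, fibreMk_zpow, fibreMk_mul]
    simp
  · rintro j ⟨n, hn⟩
    have hn' : π (fibreMk h 0 n) = π (fibreMk h 1 1) ^ j := hn
    rw [← map_zpow, fibreMk_zpow] at hn'
    obtain ⟨t, ht⟩ := (QuotientGroup.eq).1 hn'.symm
    have ht' : c ^ t = (fibreMk h j 1)⁻¹ * fibreMk h 0 n := ht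
    rw [hcpow, hinv, fibreMk_mul] at ht'
    obtain ⟨e1, e2⟩ := fibreMk_inj h ht'
    exact ⟨-t, by linarith⟩
  · exact ((hR.prod_comm (A := Multiplicative ℤ)).of_inj (fibre h).subtype
      (Subgroup.subtype_injective _)).of_surj π (QuotientGroup.mk'_surjective _)

end realize

theorem exists_rel {p l e e' f : ℕ} (hp : p.Prime) (rest : List ℕ) (G : Type) [Group G]
    (hG : Nat.card G = p ^ (e + f)) (hR : IsRegularPGroup p G)
    (hT : HasTypeInvariants p G (e :: l :: rest)) (hl : 1 ≤ l) (he : 2 * l ≤ e)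
    (he' : 2 * l ≤ e') : ∃ s : Group (Fin (p ^ (e' + f))),
      (@IsRegularPGroup p (Fin (p ^ (e' + f))) s ∧
      @HasTypeInvariants p (Fin (p ^ (e' + f))) s (e' :: l :: rest)) ∧
      @PRel p l (e - l) (e' - l) G (Fin (p ^ (e' + f))) _ s := by
  have : Fact p.Prime := ⟨hp⟩
  have hfin : Finite G := Nat.finite_of_card_ne_zero (by rw [hG]; exact (pow_pos hp.pos _).ne')
  have hP : IsPGroup p G := IsPGroup.of_card hG
  have K := reg_kprop hP hR
  obtain ⟨a, σ, w, h, hD⟩ := extract hP K e hl (by omega) rest hT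
  obtain ⟨Q, _, i', a', h', hRQ⟩ := realize (m' := e' - l) hp K hR h hD (by omega) (by omega)
  have hN := h.card (pow_pos hp.pos _)
  have hN2 : Nat.card (OmegaSubgroup p G l) = p ^ (l + f) := by
    rw [hG, show e + f = (e - l) + (l + f) by omega, pow_add] at hN
    exact (Nat.eq_of_mul_eq_mul_left (pow_pos hp.pos _) hN).symm
  have hQ : Nat.card Q = p ^ (e' + f) := by
    rw [h'.card (pow_pos hp.pos _), hN2, ← pow_add]
    congr 1
    omega
  have hfinQ : Finite Q := Nat.finite_of_card_ne_zero (by rw [hQ]; exact (pow_pos hp.pos _).ne')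
  have E : Q ≃ Fin (p ^ (e' + f)) := Finite.equivFinOfCardEq hQ
  generalize hF : Fin (p ^ (e' + f)) = F at E ⊢
  have hcF : Nat.card F = p ^ (e' + f) := by rw [← hF, Nat.card_fin]
  letI : Group F := E.symm.group
  let E' : Q ≃* F := (E.symm.mulEquiv).symm
  have hRF : IsRegularPGroup p F := hRQ.of_surj E'.toMonoidHom E'.surjective
  have hFf : Finite F := Nat.finite_of_card_ne_zero (by rw [hcF]; exact (pow_pos hp.pos _).ne')
  have KF := reg_kprop (IsPGroup.of_card hcF) hRF
  have hF' := h'.of_equiv E'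
  refine ⟨inferInstance, ⟨hRF, ?_⟩, ⟨_, _, _, _, _, _, _, _, h, hF', hD⟩⟩
  have := type_transfer hp K h KF hF' hD (l :: rest) (by
    rwa [show e - l + l = e by omega])
  rwa [show e' - l + l = e' by omega] at this

theorem card_quot_eq {X Y : Type} (r : X → X → Prop) (s : Y → Y → Prop) (R : X → Y → Prop)
    (hr : ∀ x, r x x) (hs : ∀ y, s y y)
    (hX : ∀ x, ∃ y, R x y) (hY : ∀ y, ∃ x, R x y)
    (h1 : ∀ x x' y y', R x y → R x' y' → r x x' → s y y')
    (h2 : ∀ x x' y y', R x y → R x' y' → s y y' → r x x') :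
    Nat.card (Quot r) = Nat.card (Quot s) := by
  choose F hF using hX
  choose B hB using hY
  refine Nat.card_congr ⟨Quot.map F fun x x' h => h1 _ _ _ _ (hF x) (hF x') h,
    Quot.map B fun y y' h => h2 _ _ _ _ (hB y) (hB y') h, ?_, ?_⟩
  · rintro ⟨x⟩
    exact Quot.sound (h2 _ _ _ _ (hB (F x)) (hF x) (hs _))
  · rintro ⟨y⟩
    exact Quot.sound (h1 _ _ _ _ (hF (B y)) (hB y) (hr _))

theorem kprop_of_card {p n : ℕ} (hp : p.Prime) {G : Type} [Group G] (hG : Nat.card G = p ^ n)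
    (hR : IsRegularPGroup p G) : KProp p G := by
  have : Fact p.Prime := ⟨hp⟩
  have hfin : Finite G := Nat.finite_of_card_ne_zero (by rw [hG]; exact (pow_pos hp.pos _).ne')
  exact reg_kprop (IsPGroup.of_card hG) hR

theorem psi_eq {p l e e' : ℕ} (hp : p.Prime) (rest : List ℕ) (hl : 1 ≤ l) (he : 2 * l ≤ e)
    (he' : 2 * l ≤ e') : PsiType p e (l :: rest) = PsiType p e' (l :: rest) := by
  unfold PsiType groupClassCount
  refine card_quot_eq _ _ (fun s t => @PRel p l (e - l) (e' - l) _ _ s.1 t.1) ?_ ?_ ?_ ?_ ?_ ?_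
  · intro s
    exact ⟨@MulEquiv.refl _ (mulOfGroup _ s.1)⟩
  · intro s
    exact ⟨@MulEquiv.refl _ (mulOfGroup _ s.1)⟩
  · rintro ⟨s, hs1, hs2⟩
    obtain ⟨t, ht, hR⟩ := @exists_rel p l e e' _ hp rest _ s (Nat.card_fin _) hs1 hs2 hl he he'
    exact ⟨⟨t, ht⟩, hR⟩
  · rintro ⟨s, hs1, hs2⟩
    obtain ⟨t, ht, hR⟩ := @exists_rel p l e' e _ hp rest _ s (Nat.card_fin _) hs1 hs2 hl he' he
    exact ⟨⟨t, ht⟩, @PRel.symm _ _ _ _ _ _ s t hR⟩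
  · rintro ⟨s, hs⟩ ⟨s', hs'⟩ ⟨t, ht⟩ ⟨t', ht'⟩ h h' ⟨φ⟩
    exact @PRel.iso p l (e - l) (e' - l) hp (by omega) (by omega) hl _ _ _ _ s t s' t'
      (@kprop_of_card p _ hp _ s (Nat.card_fin _) hs.1)
      (@kprop_of_card p _ hp _ s' (Nat.card_fin _) hs'.1)
      (@kprop_of_card p _ hp _ t' (Nat.card_fin _) ht'.1) h h' φ
  · rintro ⟨s, hs⟩ ⟨s', hs'⟩ ⟨t, ht⟩ ⟨t', ht'⟩ h h' ⟨φ⟩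
    exact @PRel.iso p l (e' - l) (e - l) hp (by omega) (by omega) hl _ _ _ _ t s t' s'
      (@kprop_of_card p _ hp _ t (Nat.card_fin _) ht.1)
      (@kprop_of_card p _ hp _ t' (Nat.card_fin _) ht'.1)
      (@kprop_of_card p _ hp _ s' (Nat.card_fin _) hs'.1)
      (@PRel.symm _ _ _ _ _ _ s t h) (@PRel.symm _ _ _ _ _ _ s' t' h') φ

/-- Let `f ≥ 1` and `p` a prime with `p > f + 1`.  For every partition
`(λ_1, ..., λ_k)` of `f`, the number `Ψ_{n-f}^p(λ_1, ..., λ_k)` is independent of `n`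
provided `n ≥ f + 2λ_1`. -/
theorem psi_type_stable (f p : ℕ) (hf : 1 ≤ f) (hp : p.Prime) (hpf : p > f + 1)
    (lam1 : ℕ) (rest : List ℕ)
    (hsort : List.Pairwise (· ≥ ·) (lam1 :: rest))
    (hpos : ∀ x ∈ lam1 :: rest, 0 < x)
    (hsum : (lam1 :: rest).sum = f)
    (n n' : ℕ) (hn : f + 2 * lam1 ≤ n) (hn' : f + 2 * lam1 ≤ n') :
    PsiType p (n - f) (lam1 :: rest) = PsiType p (n' - f) (lam1 :: rest) := by
  exact psi_eq hp rest (hpos lam1 (by simp)) (by omega) (by omega)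
end

section
/- Let L be a nilpotent Lie ring of order p^n with additive coexponent f. Then the nilpotency class of L is at most f + 1. -/
/-- The lower central series of a Lie ring, as additive subgroups:
`lieLCS L 0 = L` and `lieLCS L (k+1) = [lieLCS L k, L]`. -/
def lieLCS (L : Type) [LieRing L] : ℕ → AddSubgroup L
  | 0 => ⊤
  | (k + 1) => AddSubgroup.closure {x : L | ∃ y ∈ lieLCS L k, ∃ z : L, x = ⁅y, z⁆}

/-- A Lie ring is nilpotent if its lower central series reaches `⊥`. -/
def IsNilpotentLieRing (L : Type) [LieRing L] : Prop :=
  ∃ c : ℕ, lieLCS L c = ⊥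

/-- multiples of `m` -/
def Dm (L : Type) [LieRing L] (m : ℕ) : AddSubgroup L := (nsmulAddMonoidHom (α := L) m).range

/-- `q γ_t + p q L` -/
def Kt (L : Type) [LieRing L] (p q t : ℕ) : AddSubgroup L :=
  (lieLCS L t).map (nsmulAddMonoidHom (α := L) q) ⊔ Dm L (p * q)

section aux
variable {L : Type} [LieRing L]

lemma mem_Dm {m : ℕ} {x : L} : x ∈ Dm L m ↔ ∃ y : L, m • y = x := by
  simp [Dm, AddMonoidHom.mem_range]

lemma mem_Kt {p q t : ℕ} {x : L} :
    x ∈ Kt L p q t ↔ ∃ g ∈ lieLCS L t, ∃ w : L, q • g + (p * q) • w = x := by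
  simp [Kt, AddSubgroup.mem_sup, mem_Dm]

lemma lcs_lie {t : ℕ} {y : L} (hy : y ∈ lieLCS L t) (z : L) : ⁅y, z⁆ ∈ lieLCS L (t + 1) :=
  AddSubgroup.subset_closure ⟨y, hy, z, rfl⟩

lemma lcs_succ_le {t : ℕ} {H : AddSubgroup L} (h : ∀ y ∈ lieLCS L t, ∀ z : L, ⁅y, z⁆ ∈ H) :
    lieLCS L (t + 1) ≤ H := by
  rw [lieLCS, AddSubgroup.closure_le]
  rintro x ⟨y, hy, z, rfl⟩
  exact h y hy z

lemma lcs_anti (t : ℕ) : lieLCS L (t + 1) ≤ lieLCS L t := by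
  induction t with
  | zero => simp [lieLCS]
  | succ t ih => exact lcs_succ_le fun y hy z => lcs_lie (ih hy) z

lemma lcs_antitone : Antitone (lieLCS L) := antitone_nat_of_succ_le lcs_anti

lemma Kt_anti (p q : ℕ) : Antitone (Kt L p q) := by
  intro a b h
  exact sup_le_sup_right (AddSubgroup.map_mono (lcs_antitone h)) _

lemma Dm_le_Kt (p q t : ℕ) : Dm L (p * q) ≤ Kt L p q t := le_sup_right

lemma Kt_zero (p q : ℕ) : Kt L p q 0 = Dm L q := by
  ext x
  rw [mem_Kt, mem_Dm]
  constructor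
  · rintro ⟨g, -, w, rfl⟩
    exact ⟨g + p • w, by rw [smul_add, smul_smul, mul_comm]⟩
  · rintro ⟨y, rfl⟩
    exact ⟨y, by simp [lieLCS], 0, by simp⟩

/-- to bound `Kt (t+1)` it is enough to treat brackets -/
lemma Kt_succ_le {p q t : ℕ} {H : AddSubgroup L} (hD : Dm L (p * q) ≤ H)
    (h : ∀ y ∈ lieLCS L t, ∀ z : L, q • ⁅y, z⁆ ∈ H) : Kt L p q (t + 1) ≤ H := by
  refine sup_le ?_ hD
  rw [AddSubgroup.map_le_iff_le_comap]
  exact lcs_succ_le fun y hy z => by simpa using h y hy z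

lemma Kt_lie {p q t : ℕ} {y : L} (hy : q • y ∈ Kt L p q t) (z : L) :
    q • ⁅y, z⁆ ∈ Kt L p q (t + 1) := by
  obtain ⟨g, hg, w, h⟩ := mem_Kt.1 hy
  refine mem_Kt.2 ⟨⁅g, z⁆, lcs_lie hg z, ⁅w, z⁆, ?_⟩
  rw [← nsmul_lie, ← nsmul_lie, ← nsmul_lie, ← add_lie, h]

lemma smul_mem_Kt {p q t : ℕ} {y : L} (hy : y ∈ lieLCS L t) : q • y ∈ Kt L p q t :=
  mem_Kt.2 ⟨y, hy, 0, by simp⟩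

lemma Kt_stab {p q t : ℕ} (h : Kt L p q t ≤ Kt L p q (t + 1)) (m : ℕ) :
    Kt L p q (t + m) ≤ Kt L p q (t + m + 1) := by
  induction m with
  | zero => exact h
  | succ m ih =>
    exact Kt_succ_le (Dm_le_Kt _ _ _) fun y hy z => Kt_lie (ih (smul_mem_Kt hy)) z

lemma Kt_bot {p q t : ℕ} (hnil : IsNilpotentLieRing L) (h : Kt L p q t ≤ Kt L p q (t + 1)) :
    Kt L p q t ≤ Dm L (p * q) := by
  obtain ⟨c, hc⟩ := hnil
  have h1 : ∀ m, Kt L p q t ≤ Kt L p q (t + m) := by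
    intro m
    induction m with
    | zero => exact le_rfl
    | succ m ih => exact ih.trans (Kt_stab h m)
  refine (h1 c).trans ((Kt_anti p q (Nat.le_add_left c t)).trans ?_)
  simp [Kt, hc]

lemma cyc_of {p q n : ℕ} (hn : ∀ x : L, p ^ n • x = 0) (x : L)
    (h : Dm L q ≤ AddSubgroup.zmultiples (q • x) ⊔ Dm L (p * q)) :
    Dm L q ≤ AddSubgroup.zmultiples (q • x) := by
  have key : ∀ m : ℕ, ∀ y : L, ∃ a : ℤ, ∃ w : L, q • y = a • (q • x) + (p ^ m * q) • w := by
    intro m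
    induction m with
    | zero => intro y; exact ⟨0, y, by simp⟩
    | succ m ih =>
      intro y
      obtain ⟨a, w, hw⟩ := ih y
      obtain ⟨u, hu, v, hv, huv⟩ := AddSubgroup.mem_sup.1 (h (mem_Dm.2 ⟨w, rfl⟩))
      obtain ⟨b, rfl⟩ := AddSubgroup.mem_zmultiples_iff.1 hu
      obtain ⟨w', rfl⟩ := mem_Dm.1 hv
      refine ⟨a + p ^ m * b, w', ?_⟩
      rw [hw, mul_smul, ← huv]
      simp only [smul_add, add_smul, mul_smul, pow_succ, ← natCast_zsmul, Nat.cast_pow]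
      abel
  intro z hz
  obtain ⟨y, rfl⟩ := mem_Dm.1 hz
  obtain ⟨a, w, hw⟩ := key n y
  rw [mul_smul, hn, add_zero] at hw
  rw [hw]
  exact AddSubgroup.zsmul_mem_zmultiples _ _

lemma central_of {q : ℕ} (x : L) (h : Dm L q ≤ AddSubgroup.zmultiples (q • x)) (y z : L) :
    ⁅q • y, z⁆ = 0 := by
  obtain ⟨a, ha⟩ := AddSubgroup.mem_zmultiples_iff.1 (h (mem_Dm.2 ⟨y, rfl⟩))
  obtain ⟨b, hb⟩ := AddSubgroup.mem_zmultiples_iff.1 (h (mem_Dm.2 ⟨z, rfl⟩))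
  rw [← ha, zsmul_lie, nsmul_lie, ← lie_nsmul, ← hb]
  simp

lemma card_lt [Finite L] {p n : ℕ} (hp : p.Prime) (hcard : Nat.card L = p ^ n)
    {H K : AddSubgroup L} (h : H < K) : ∃ j, 0 < j ∧ Nat.card K = p ^ j * Nat.card H := by
  have h1 := AddSubgroup.card_mul_index H
  have h3 : Nat.card H ∣ Nat.card K := AddSubgroup.card_dvd_of_le h.le
  obtain ⟨r, hr⟩ := h3
  have h4 : Nat.card K ∣ p ^ n := hcard ▸ AddSubgroup.card_addSubgroup_dvd_card K
  obtain ⟨j, -, hj⟩ := (Nat.dvd_prime_pow hp).1 ((Dvd.intro_left _ hr.symm).trans h4)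
  refine ⟨j, ?_, by rw [hr, hj, mul_comm]⟩
  rcases Nat.eq_zero_or_pos j with rfl | h0
  · exfalso
    apply h.ne
    apply AddSubgroup.eq_of_le_of_card_ge h.le
    rw [hr, hj]; simp
  · exact h0

lemma exists_gen [Finite L] {p : ℕ} (hp : p.Prime)
    {H K : AddSubgroup L} (h : H < K) (hc : Nat.card K = p * Nat.card H) :
    ∃ x ∈ K, K ≤ AddSubgroup.zmultiples x ⊔ H := by
  obtain ⟨x, hxK, hxH⟩ := SetLike.exists_of_lt h
  refine ⟨x, hxK, ?_⟩
  set M := AddSubgroup.zmultiples x ⊔ H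
  have hMK : M ≤ K := sup_le (by simpa using hxK) h.le
  have hHM : H ≤ M := le_sup_right
  have hxM : x ∈ M := (le_sup_left : _ ≤ M) (AddSubgroup.mem_zmultiples x)
  obtain ⟨r, hr⟩ := AddSubgroup.card_dvd_of_le hHM
  obtain ⟨s, hs⟩ := AddSubgroup.card_dvd_of_le hMK
  have hpos : 0 < Nat.card H := Nat.card_pos
  have hrs : p = r * s := by
    apply Nat.eq_of_mul_eq_mul_left hpos
    rw [← mul_assoc, ← hr, ← hs, hc, mul_comm]
  rcases (Nat.dvd_prime hp).1 (Dvd.intro _ hrs.symm) with h1 | h1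
  · exfalso
    apply hxH
    have : H = M := AddSubgroup.eq_of_le_of_card_ge hHM (by rw [hr, h1]; simp)
    rw [this]; exact hxM
  · have : M = K := by
      apply AddSubgroup.eq_of_le_of_card_ge hMK
      rw [hc, hr, h1, mul_comm]
    exact this.ge

lemma step [Finite L] {p n q : ℕ} (hp : p.Prime) (hcard : Nat.card L = p ^ n)
    (hnil : IsNilpotentLieRing L)
    (hnc : ¬ ∃ x : L, Dm L q ≤ AddSubgroup.zmultiples (q • x)) :
    ∃ t, Kt L p q t ≤ Dm L (p * q) ∧
      p ^ (t + 1) * Nat.card (Dm L (p * q)) ≤ Nat.card (Dm L q) := by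
  classical
  have hn : ∀ x : L, p ^ n • x = 0 := fun x => by rw [← hcard]; exact card_nsmul_eq_zero'
  have hex : ∃ t, Kt L p q t ≤ Dm L (p * q) := by
    obtain ⟨c, hc⟩ := hnil
    exact ⟨c, by simp [Kt, hc]⟩
  have hlt : ∀ t, ¬ Kt L p q t ≤ Dm L (p * q) → Kt L p q (t + 1) < Kt L p q t := fun t ht =>
    lt_of_le_not_ge (Kt_anti p q (Nat.le_succ t)) fun h => ht (Kt_bot hnil h)
  have h0 : ¬ Kt L p q 0 ≤ Dm L (p * q) := by
    intro h
    rw [Kt_zero] at h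
    exact hnc ⟨0, cyc_of hn 0 (h.trans le_sup_right)⟩
  have h01 : p ^ 2 * Nat.card (Kt L p q 1) ≤ Nat.card (Kt L p q 0) := by
    obtain ⟨j, hj, hc⟩ := card_lt hp hcard (hlt 0 h0)
    rcases Nat.lt_or_ge j 2 with h2 | h2
    · exfalso
      obtain rfl : j = 1 := by omega
      rw [pow_one] at hc
      obtain ⟨x', hx', hK⟩ := exists_gen hp (hlt 0 h0) hc
      rw [Kt_zero] at hx' hK
      obtain ⟨x, rfl⟩ := mem_Dm.1 hx'
      have hrep : ∀ y : L, ∃ a : ℤ, ∃ u ∈ Kt L p q 1, a • (q • x) + u = q • y := by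
        intro y
        obtain ⟨v, hv, u, hu, huv⟩ := AddSubgroup.mem_sup.1 (hK (mem_Dm.2 ⟨y, rfl⟩))
        obtain ⟨a, rfl⟩ := AddSubgroup.mem_zmultiples_iff.1 hv
        exact ⟨a, u, hu, huv⟩
      have hu2 : ∀ u ∈ Kt L p q 1, ∀ z : L, ⁅u, z⁆ ∈ Kt L p q 2 := by
        intro u hu z
        obtain ⟨g, hg, w, rfl⟩ := mem_Kt.1 hu
        exact mem_Kt.2 ⟨⁅g, z⁆, lcs_lie hg z, ⁅w, z⁆, by simp⟩
      have h12 : Kt L p q 1 ≤ Kt L p q 2 := by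
        refine Kt_succ_le (Dm_le_Kt _ _ _) fun y _ z => ?_
        obtain ⟨a, u, hu, hy⟩ := hrep y
        obtain ⟨b, v, hv, hz⟩ := hrep z
        rw [← nsmul_lie, ← hy, add_lie]
        refine add_mem ?_ (hu2 u hu z)
        rw [zsmul_lie, nsmul_lie, ← lie_nsmul, ← hz, lie_add, lie_zsmul, lie_nsmul, lie_self,
          smul_zero, smul_zero, zero_add]
        refine zsmul_mem ?_ _
        rw [← lie_skew]
        exact neg_mem (hu2 v hv x)
      exact hnc ⟨x, cyc_of hn x (hK.trans (sup_le_sup_left (Kt_bot hnil h12) _))⟩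
    · rw [hc]
      exact Nat.mul_le_mul_right _ (Nat.pow_le_pow_right hp.pos h2)
  have hmin : ∀ m, (∀ s ≤ m, ¬ Kt L p q s ≤ Dm L (p * q)) →
      p ^ (m + 2) * Nat.card (Kt L p q (m + 1)) ≤ Nat.card (Kt L p q 0) := by
    intro m
    induction m with
    | zero => intro _; exact h01
    | succ m ih =>
      intro hs
      refine le_trans ?_ (ih fun s h => hs s (by omega))
      obtain ⟨j, hj, hc⟩ := card_lt hp hcard (hlt (m + 1) (hs _ le_rfl))
      rw [hc, pow_succ p (m + 2), mul_assoc]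
      refine Nat.mul_le_mul_left _ (Nat.mul_le_mul_right _ ?_)
      exact Nat.le_self_pow hj.ne' p
  have hspec := Nat.find_spec hex
  have hm := fun s => Nat.find_min hex (m := s)
  obtain ⟨m, hfm⟩ : ∃ m, Nat.find hex = m + 1 := by
    refine Nat.exists_eq_succ_of_ne_zero fun h => h0 ?_
    rw [h] at hspec; exact hspec
  rw [hfm] at hspec hm
  refine ⟨m + 1, hspec, ?_⟩
  have := hmin m fun s hs => hm s (by omega)
  rwa [Kt_zero, le_antisymm hspec (Dm_le_Kt _ _ _)] at this

lemma lcs_add {s q : ℕ} (h : lieLCS L s ≤ Dm L q) (t : ℕ) :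
    lieLCS L (s + t) ≤ (lieLCS L t).map (nsmulAddMonoidHom (α := L) q) := by
  induction t with
  | zero => simpa [lieLCS, Dm, AddMonoidHom.range_eq_map] using h
  | succ t ih =>
    refine lcs_succ_le fun y hy z => ?_
    obtain ⟨g, hg, rfl⟩ := AddSubgroup.mem_map.1 (ih hy)
    exact AddSubgroup.mem_map.2 ⟨⁅g, z⁆, lcs_lie hg z, by simp⟩

lemma chain [Finite L] {p n : ℕ} (hp : p.Prime) (hcard : Nat.card L = p ^ n)
    (hnil : IsNilpotentLieRing L) (i : ℕ)
    (hnc : ∀ j < i, ¬ ∃ x : L, Dm L (p ^ j) ≤ AddSubgroup.zmultiples (p ^ j • x)) :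
    ∃ s, lieLCS L s ≤ Dm L (p ^ i) ∧ p ^ (s + i) * Nat.card (Dm L (p ^ i)) ≤ p ^ n := by
  induction i with
  | zero =>
    refine ⟨0, fun x _ => mem_Dm.2 ⟨x, by simp⟩, ?_⟩
    rw [← hcard]
    simpa using AddSubgroup.card_le_card_addGroup (Dm L 1)
  | succ i ih =>
    obtain ⟨s, hs, hc⟩ := ih fun j hj => hnc j (by omega)
    obtain ⟨t, ht, hc'⟩ := step hp hcard hnil (hnc i (Nat.lt_succ_self i))
    rw [← pow_succ'] at ht hc'
    refine ⟨s + t, (lcs_add hs t).trans (le_sup_left.trans ht), ?_⟩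
    refine le_trans ?_ hc
    have : s + t + (i + 1) = (s + i) + (t + 1) := by ring
    rw [this, pow_add p (s + i), mul_assoc]
    exact Nat.mul_le_mul_left _ hc'

end aux

/-- Let `L` be a nilpotent Lie ring of order `p ^ n` with additive
coexponent `f` (i.e. the additive exponent is `p ^ e` with `n - e = f`).  Then the
nilpotency class of `L` is at most `f + 1`. -/
theorem lie_coexponent_class_bound (p n f : ℕ) (hp : p.Prime)
    (L : Type) [LieRing L] [Finite L]
    (hcard : Nat.card L = p ^ n)
    (hcoexp : ∃ e : ℕ, AddMonoid.exponent L = p ^ e ∧ n - e = f)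
    (hnil : IsNilpotentLieRing L) :
    lieLCS L (f + 1) = ⊥ := by
  classical
  obtain ⟨e, he, rfl⟩ := hcoexp
  have hn : ∀ x : L, p ^ n • x = 0 := fun x => by rw [← hcard]; exact card_nsmul_eq_zero'
  have hex : ∃ k, ∃ x : L, Dm L (p ^ k) ≤ AddSubgroup.zmultiples (p ^ k • x) := by
    refine ⟨n, 0, fun y hy => ?_⟩
    obtain ⟨w, rfl⟩ := mem_Dm.1 hy
    simp [hn]
  obtain ⟨x, hx⟩ := Nat.find_spec hex
  obtain ⟨s, hs, hc⟩ := chain hp hcard hnil (Nat.find hex) fun j hj => Nat.find_min hex hj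
  set k := Nat.find hex
  have hd : Nat.card (Dm L (p ^ k)) ∣ p ^ n := hcard ▸ AddSubgroup.card_addSubgroup_dvd_card _
  obtain ⟨l, -, hl⟩ := (Nat.dvd_prime_pow hp).1 hd
  rw [hl, ← pow_add] at hc
  have h1 : s + k + l ≤ n := (Nat.pow_le_pow_iff_right hp.one_lt).1 hc
  have h2 : e ≤ k + l := by
    have : AddMonoid.exponent L ∣ p ^ (k + l) := by
      refine AddMonoid.exponent_dvd_of_forall_nsmul_eq_zero fun y => ?_
      have h3 : Nat.card (Dm L (p ^ k)) • (⟨p ^ k • y, mem_Dm.2 ⟨y, rfl⟩⟩ : Dm L (p ^ k)) = 0 :=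
        card_nsmul_eq_zero'
      have h4 := congrArg Subtype.val h3
      rw [hl] at h4
      rw [add_comm, pow_add, mul_smul]
      simpa using h4
    rw [he] at this
    exact (Nat.pow_dvd_pow_iff_le_right hp.one_lt).1 this
  have h3 : lieLCS L (s + 1) ≤ ⊥ := by
    refine lcs_succ_le fun y hy z => ?_
    obtain ⟨w, rfl⟩ := mem_Dm.1 (hs hy)
    exact AddSubgroup.mem_bot.2 (central_of x hx w z)
  exact le_bot_iff.1 ((lcs_antitone (by omega)).trans h3)
end

section
/- Let f be a positive integer and p a prime with p > f + 1. Then for every n ≥ 2f, Ψ_{n,f}^p equals the sum, over all partitions λ = (λ_1, ..., λ_k) of f with λ_1 ≥ ... ≥ λ_k, of Ψ_{n-f}^p(λ_1, ..., λ_k). -/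
/-- `Ψ_{n,f}^p`: the number of isomorphism classes of groups of order `p ^ n`
with coexponent `f`, i.e. with exponent `p ^ e` where `n - e = f`. -/
noncomputable def PsiCoexp (p n f : ℕ) : ℕ :=
  groupClassCount (p ^ n) fun s =>
    letI := s
    ∃ e : ℕ, Monoid.exponent (Fin (p ^ n)) = p ^ e ∧ n - e = f

open scoped commutatorElement

/-- derivative of a sequence -/
def seqD {Q : Type} [Group Q] (g : ℕ → Q) : ℕ → Q := fun n => (g n)⁻¹ * g (n + 1)

/-- truncated polynomial sequences -/
def PolyT {Q : Type} [Group Q] (F : ℕ → Subgroup Q) : ℕ → ℕ → (ℕ → Q) → Prop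
  | 0, _, _ => True
  | m + 1, k, g => (∀ n, g n ∈ F k) ∧ PolyT F m (k + 1) (seqD g)

section Poly
variable {Q : Type} [Group Q] {F : ℕ → Subgroup Q}

lemma PolyT.trunc {m : ℕ} : ∀ {k : ℕ} {g : ℕ → Q}, PolyT F (m + 1) k g → PolyT F m k g := by
  induction m with
  | zero => intro k g _; trivial
  | succ m ih => intro k g h; exact ⟨h.1, ih h.2⟩

lemma PolyT.mono (hF : ∀ i, F (i + 1) ≤ F i) {m : ℕ} :
    ∀ {k l : ℕ} {g : ℕ → Q}, k ≤ l → PolyT F m l g → PolyT F m k g := by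
  have hA : Antitone F := antitone_nat_of_succ_le hF
  induction m with
  | zero => intro k l g _ _; trivial
  | succ m ih =>
    intro k l g hkl h
    exact ⟨fun n => hA hkl (h.1 n), ih (by omega) h.2⟩

lemma PolyT.one {m : ℕ} : ∀ {k : ℕ}, PolyT F m k (fun _ => 1) := by
  induction m with
  | zero => intro k; trivial
  | succ m ih =>
    intro k
    refine ⟨fun n => one_mem _, ?_⟩
    have : seqD (fun _ : ℕ => (1 : Q)) = fun _ => 1 := by funext n; simp [seqD]
    rw [this]; exact ih

lemma PolyT.closed (hF : ∀ i, F (i + 1) ≤ F i)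
    (hC : ∀ i j, ∀ a ∈ F i, ∀ b ∈ F j, ⁅a, b⁆ ∈ F (i + j)) (m : ℕ) :
    (∀ k g h, PolyT F m k g → PolyT F m k h → PolyT F m k (fun n => g n * h n)) ∧
    (∀ k g, PolyT F m k g → PolyT F m k (fun n => (g n)⁻¹)) ∧
    (∀ i j g h, PolyT F m i g → PolyT F m j h → PolyT F m (i + j) (fun n => ⁅g n, h n⁆)) := by
  induction m with
  | zero => refine ⟨?_, ?_, ?_⟩ <;> intros <;> trivial
  | succ m ih =>
    obtain ⟨hmul, hinv, hcom⟩ := ih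
    have hconj : ∀ k w u, PolyT F m 0 w → PolyT F m k u →
        PolyT F m k (fun n => w n * u n * (w n)⁻¹) := by
      intro k w u hw hu
      have h1 := hmul k _ _ (by simpa using hcom 0 k w u hw hu) hu
      have : (fun n => w n * u n * (w n)⁻¹) = fun n => ⁅w n, u n⁆ * u n := by
        funext n; simp [commutatorElement_def]
      rw [this]; exact h1
    have hm : ∀ {k l : ℕ} {g : ℕ → Q}, k ≤ l → PolyT F m l g → PolyT F m k g :=
      fun h => PolyT.mono hF h
    refine ⟨?_, ?_, ?_⟩
    · intro k g h hg hh
      refine ⟨fun n => mul_mem (hg.1 n) (hh.1 n), ?_⟩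
      have h0 := hm (Nat.zero_le k) hh.trunc
      have := hmul _ _ _ (hconj _ _ _ (hinv _ _ h0) hg.2) hh.2
      convert this using 1
      funext n; simp [seqD]; group
    · intro k g hg
      refine ⟨fun n => inv_mem (hg.1 n), ?_⟩
      have h0 := hm (Nat.zero_le k) hg.trunc
      have := hconj _ _ _ h0 (hinv _ _ hg.2)
      convert this using 1
      funext n; simp only [seqD]; group
    · intro i j g h hg hh
      refine ⟨fun n => hC i j _ (hg.1 n) _ (hh.1 n), ?_⟩
      have hg0 := hm (Nat.zero_le i) hg.trunc
      have hh0 := hm (Nat.zero_le j) hh.trunc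
      have hhb := hmul _ _ _ hh.trunc (hm (Nat.le_succ j) hh.2)
      have e1 := hcom _ _ _ _ hg.2 hhb
      have e2 := hcom _ _ _ _ hg.trunc hh.2
      have e3 := hinv _ _ (hcom _ _ _ _ hg0 hh0)
      have e4 := hmul _ _ _ e3 hg0
      have e5 := hconj _ _ _ e4 e1
      have e6 := hconj _ _ _ hh0 e2
      have e7 := hmul (i + j + 1) _ _ (by convert e5 using 1; omega) e6
      convert e7 using 1
      funext n; simp only [seqD, commutatorElement_def]; group

/-- polynomial sequences -/
def PolyS {Q : Type} [Group Q] (F : ℕ → Subgroup Q) (k : ℕ) (g : ℕ → Q) : Prop :=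
  ∀ m, PolyT F m k g

lemma PolyS.binom (hF : ∀ i, F (i + 1) ≤ F i) {i : ℕ} : ∀ {k : ℕ} {a : Q}, a ∈ F (k + i) →
    PolyS F k (fun n => a ^ (n.choose i)) := by
  induction i with
  | zero =>
    intro k a ha m
    cases m with
    | zero => trivial
    | succ m =>
      refine ⟨fun n => by simpa using ha, ?_⟩
      have : seqD (fun n => a ^ (n.choose 0)) = fun _ => (1 : Q) := by funext n; simp [seqD]
      rw [this]; exact PolyT.one
  | succ i ih =>
    intro k a ha m
    cases m with
    | zero => trivial
    | succ m =>
      have hd : seqD (fun n => a ^ (n.choose (i + 1))) = fun n => a ^ (n.choose i) := by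
        funext n
        simp only [seqD]
        rw [Nat.choose_succ_succ, add_comm (n.choose i), pow_add]; simp
      refine ⟨fun n => ?_, ?_⟩
      · exact pow_mem (antitone_nat_of_succ_le hF (Nat.le_add_right _ _) ha) _
      · rw [hd]; exact ih (by convert ha using 2; omega) m

lemma PolyS.val (k : ℕ) : ∀ (j : ℕ) (g : ℕ → Q), PolyS F j g → (∀ i < k, g i = 1) →
    g k ∈ F (j + k) := by
  induction k with
  | zero => intro j g hg _; exact (hg 1).1 0
  | succ k ih =>
    intro j g hg h1
    have h2 : PolyS F (j + 1) (seqD g) := fun m => (hg (m + 1)).2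
    have h3 := ih _ _ h2 (fun i hi => by simp [seqD, h1 i (by omega), h1 (i + 1) (by omega)])
    have h4 : seqD g k = g (k + 1) := by simp [seqD, h1 k (by omega)]
    rw [h4] at h3
    convert h3 using 2; omega

end Poly

lemma pow_hom_of_filtration {Q : Type} [Group Q] {F : ℕ → Subgroup Q} {p : ℕ} (hp : p.Prime)
    (hF : ∀ i, F (i + 1) ≤ F i)
    (hC : ∀ i j, ∀ a ∈ F i, ∀ b ∈ F j, ⁅a, b⁆ ∈ F (i + j))
    (h1 : F 1 = ⊤) (hpb : F p = ⊥) (hexp : ∀ a ∈ F 2, a ^ p = 1) (x y : Q) :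
    x ^ p * y ^ p = (x * y) ^ p := by
  have hA : Antitone F := antitone_nat_of_succ_le hF
  have key : ∀ d k, k + d = p → 2 ≤ k → ∀ g, PolyS F 0 g → (∀ i < k, g i = 1) → g p = 1 := by
    intro d
    induction d with
    | zero =>
      intro k hk _ g hg hi
      have := PolyS.val k 0 g hg hi
      have e : k = p := by omega
      subst e
      simpa [hpb] using this
    | succ d ih =>
      intro k hk h2 g hg hi
      have ha := PolyS.val k 0 g hg hi
      have hb := PolyS.binom hF ha
      have hg' : PolyS F 0 (fun n => g n * (g k ^ (n.choose k))⁻¹) := fun m =>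
        (PolyT.closed hF hC m).1 _ _ _ (hg m) ((PolyT.closed hF hC m).2.1 _ _ (hb m))
      have := ih (k + 1) (by omega) (by omega) _ hg' (by
        intro i hik
        rcases Nat.lt_or_ge i k with h | h
        · simp [hi i h, Nat.choose_eq_zero_of_lt h]
        · have : i = k := by omega
          subst this; simp)
      have hd : p ∣ p.choose k := hp.dvd_choose_self (by omega) (by omega)
      obtain ⟨c, hc⟩ := hd
      have e : g k ^ (p.choose k) = 1 := by
        rw [hc, pow_mul, hexp _ (hA (by omega : 2 ≤ 0 + k) ha), one_pow]
      simpa [e] using this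
  have hx : ∀ x : Q, PolyS F 0 (fun n => x ^ n) := fun x => by
    have := PolyS.binom (F := F) hF (i := 1) (k := 0) (a := x) (by simp [h1])
    simpa using this
  have hg : PolyS F 0 (fun n => x ^ n * y ^ n * ((x * y) ^ n)⁻¹) := fun m => by
    obtain ⟨c1, c2, c3⟩ := PolyT.closed hF hC m
    exact c1 _ _ _ (c1 _ _ _ (hx x m) (hx y m)) (c2 _ _ (hx _ m))
  have := key (p - 2) 2 (by have := hp.two_le; omega) le_rfl _ hg (by
    intro i hi
    interval_cases i <;> simp)
  exact mul_inv_eq_one.mp this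

lemma lcs_comm {Q : Type} [Group Q] (j : ℕ) : ∀ i,
    ⁅(⊤ : Subgroup Q).lowerCentralSeries i, (⊤ : Subgroup Q).lowerCentralSeries j⁆ ≤
      (⊤ : Subgroup Q).lowerCentralSeries (i + j + 1) := by
  induction j with
  | zero => intro i; exact le_rfl
  | succ j ih =>
    intro i
    rw [Subgroup.commutator_comm]
    set N := (⊤ : Subgroup Q).lowerCentralSeries (i + (j + 1) + 1) with hN
    have key : ∀ H₁ H₂ H₃ : Subgroup Q, ⁅⁅H₂, H₃⁆, H₁⁆ ≤ N → ⁅⁅H₃, H₁⁆, H₂⁆ ≤ N →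
        ⁅⁅H₁, H₂⁆, H₃⁆ ≤ N := by
      intro H₁ H₂ H₃ h1 h2
      have hh : ∀ H : Subgroup Q, H ≤ N ↔ H.map (QuotientGroup.mk' N) = ⊥ := by
        intro H
        rw [Subgroup.map_eq_bot_iff, QuotientGroup.ker_mk']
      rw [hh] at h1 h2 ⊢
      simp only [Subgroup.map_commutator] at h1 h2 ⊢
      exact Subgroup.commutator_commutator_eq_bot_of_rotate h1 h2
    rw [Subgroup.lowerCentralSeries_succ]
    apply key
    · rw [Subgroup.commutator_comm ⊤]
      have := ih (i + 1)
      rw [Subgroup.lowerCentralSeries_succ] at this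
      convert this using 2
      omega
    · have := Subgroup.commutator_mono (ih i) (le_refl (⊤ : Subgroup Q))
      exact this

lemma pow_hom_of_lcs {Q : Type} [Group Q] {p : ℕ} (hp : p.Prime)
    (hb : (⊤ : Subgroup Q).lowerCentralSeries (p - 1) = ⊥)
    (hexp : ∀ a ∈ commutator Q, a ^ p = 1) (x y : Q) :
    x ^ p * y ^ p = (x * y) ^ p := by
  have hA := (⊤ : Subgroup Q).lowerCentralSeries_antitone
  apply pow_hom_of_filtration (F := fun i => (⊤ : Subgroup Q).lowerCentralSeries (i - 1)) hp
  · intro i; exact hA (by omega)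
  · intro i j a ha b hb
    rcases Nat.eq_zero_or_pos i with h | h
    · subst h
      have : ⁅(⊤ : Subgroup Q), (⊤ : Subgroup Q).lowerCentralSeries (j - 1)⁆ ≤
        (⊤ : Subgroup Q).lowerCentralSeries (j - 1) := Subgroup.commutator_le_right _ _
      simpa using this (Subgroup.commutator_mem_commutator (Subgroup.mem_top a) hb)
    rcases Nat.eq_zero_or_pos j with h' | h'
    · subst h'
      have : ⁅(⊤ : Subgroup Q).lowerCentralSeries (i - 1), (⊤ : Subgroup Q)⁆ ≤
        (⊤ : Subgroup Q).lowerCentralSeries (i - 1) := Subgroup.commutator_le_left _ _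
      simpa using this (Subgroup.commutator_mem_commutator ha (Subgroup.mem_top b))
    have := lcs_comm (j - 1) (i - 1) (Subgroup.commutator_mem_commutator ha hb)
    convert this using 2
    omega
  · rfl
  · exact hb
  · exact hexp

/-- Finite `p`-groups with a cyclic subgroup of index at most `p ^ f`. -/
def CycInd (p f : ℕ) (G : Type) [Group G] : Prop :=
  Finite G ∧ IsPGroup p G ∧ ∃ A : Subgroup G, IsCyclic A ∧ A.index ≤ p ^ f

lemma CycInd.sub {p f : ℕ} {G : Type} [Group G] (h : CycInd p f G) (H : Subgroup G) :
    CycInd p f H := by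
  obtain ⟨hfin, hpg, A, hA, hi⟩ := h
  refine ⟨inferInstance, hpg.to_subgroup H, A.subgroupOf H, ?_, ?_⟩
  · let φ : A.subgroupOf H →* A :=
      { toFun := fun x => ⟨x.1.1, Subgroup.mem_subgroupOf.mp x.2⟩
        map_one' := rfl
        map_mul' := fun _ _ => rfl }
    refine isCyclic_of_injective φ ?_
    intro a b hab
    have : a.1.1 = b.1.1 := congrArg (fun z : A => z.1) hab
    exact Subtype.ext (Subtype.ext this)
  · have := Subgroup.relIndex_le_of_le_right (H := A) (le_top : H ≤ ⊤)
      (by rw [Subgroup.relIndex_top_right]; exact Subgroup.index_ne_zero_of_finite)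
    rw [Subgroup.relIndex_top_right] at this
    exact this.trans hi

lemma CycInd.quot {p f : ℕ} {G : Type} [Group G] (h : CycInd p f G) (N : Subgroup G)
    [N.Normal] : CycInd p f (G ⧸ N) := by
  obtain ⟨hfin, hpg, A, hA, hi⟩ := h
  refine ⟨inferInstance, hpg.to_quotient N, A.map (QuotientGroup.mk' N), ?_, ?_⟩
  · exact isCyclic_of_surjective ((QuotientGroup.mk' N).subgroupMap A)
      ((QuotientGroup.mk' N).subgroupMap_surjective A)
  · exact (Nat.le_of_dvd (Nat.pos_of_ne_zero Subgroup.index_ne_zero_of_finite)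
      (Subgroup.index_map_dvd A (QuotientGroup.mk'_surjective N))).trans hi

lemma nongen {p : ℕ} [Fact p.Prime] {G : Type} [Group G] [Finite G] (hpg : IsPGroup p G)
    (H : Subgroup G) (h : H ⊔ commutator G = ⊤) : H = ⊤ := by
  rcases eq_top_or_exists_le_coatom H with h1 | ⟨M, hM, hHM⟩
  · exact h1
  exfalso
  have hnil : Group.IsNilpotent G := hpg.isNilpotent
  have hN : M.Normal := 
    Subgroup.NormalizerCondition.normal_of_coatom _ (Group.normalizerCondition_of_isNilpotent (G := G)) hM
  have : Nontrivial (G ⧸ M) := by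
    rw [QuotientGroup.nontrivial_iff]; exact hM.1
  have hnil2 : Group.IsNilpotent (G ⧸ M) := inferInstance
  have hlt := Group.IsSolvable.commutator_lt_top_of_nontrivial (G ⧸ M)
  have hMt : M ⊔ commutator G = ⊤ := top_le_iff.mp (h ▸ sup_le_sup_right hHM _)
  have e := congrArg (Subgroup.map (QuotientGroup.mk' M)) hMt
  rw [Subgroup.map_sup, QuotientGroup.map_mk'_self, bot_sup_eq,
    Subgroup.map_top_of_surjective _ (QuotientGroup.mk'_surjective M), commutator_def,
    Subgroup.map_commutator,
    Subgroup.map_top_of_surjective _ (QuotientGroup.mk'_surjective M)] at e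
  rw [commutator_def] at hlt
  exact hlt.ne e

lemma lcs_bot {p f : ℕ} (hp : p.Prime) {Q : Type} [Group Q] (h : CycInd p f Q)
    (hexp : ∀ a ∈ commutator Q, a ^ p = 1) :
    (⊤ : Subgroup Q).lowerCentralSeries (f + 1) = ⊥ := by
  have : Fact p.Prime := ⟨hp⟩
  obtain ⟨hfin, hpg, A, hA, hi⟩ := h
  have hnil : Group.IsNilpotent Q := hpg.isNilpotent
  have hanti := (⊤ : Subgroup Q).lowerCentralSeries_antitone
  by_cases hT : A ⊔ commutator Q = ⊤
  · have hAt := nongen hpg A hT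
    have : commutator Q = ⊥ := by
      rw [commutator_eq_bot_iff]
      subst hAt
      have : IsCyclic Q := isCyclic_of_surjective (Subgroup.topEquiv (G := Q)).toMonoidHom
        (Subgroup.topEquiv (G := Q)).surjective
      exact ⟨⟨fun a b => IsCyclic.commGroup.mul_comm a b⟩⟩
    rw [← Subgroup.top_lowerCentralSeries_one] at this
    exact le_bot_iff.mp (this ▸ hanti (by omega))
  have hstep : ∀ k, (⊤ : Subgroup Q).lowerCentralSeries (k + 1) = ⊥ ∨
      Nat.card ((⊤ : Subgroup Q).lowerCentralSeries (k + 1)) * p ≤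
        Nat.card ((⊤ : Subgroup Q).lowerCentralSeries k) := by
    intro k
    by_cases he : (⊤ : Subgroup Q).lowerCentralSeries (k + 1) =
        (⊤ : Subgroup Q).lowerCentralSeries k
    · left
      obtain ⟨n, hn⟩ := Subgroup.nilpotent_iff_lowerCentralSeries.mp hnil
      have hc : ∀ d, (⊤ : Subgroup Q).lowerCentralSeries (k + d) =
          (⊤ : Subgroup Q).lowerCentralSeries k := by
        intro d
        induction d with
        | zero => rfl
        | succ d ih =>
          rw [← add_assoc, Subgroup.lowerCentralSeries_succ, ih]; exact he
      rw [he, ← hc n]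
      exact le_bot_iff.mp (hn ▸ hanti (by omega))
    · right
      have hle := hanti (Nat.le_succ k)
      have h1 := Subgroup.card_mul_index
        (((⊤ : Subgroup Q).lowerCentralSeries (k + 1)).subgroupOf
          ((⊤ : Subgroup Q).lowerCentralSeries k))
      rw [Nat.card_congr (Subgroup.subgroupOfEquivOfLe hle).toEquiv] at h1
      rw [← h1]
      apply Nat.mul_le_mul_left
      set B := ((⊤ : Subgroup Q).lowerCentralSeries (k + 1)).subgroupOf
          ((⊤ : Subgroup Q).lowerCentralSeries k) with hB
      obtain ⟨n, hn⟩ := (hpg.to_subgroup ((⊤ : Subgroup Q).lowerCentralSeries k)).index B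
      have hne : B.index ≠ 1 := by
        rw [Ne, Subgroup.index_eq_one, Subgroup.subgroupOf_eq_top]
        intro h
        exact he (le_antisymm hle h)
      rw [hn] at hne ⊢
      exact Nat.le_self_pow (by rintro rfl; simp at hne) p
  -- card of commutator
  have hc1 : Nat.card ((⊤ : Subgroup Q).lowerCentralSeries 1) ≤ p ^ f := by
    rw [Subgroup.top_lowerCentralSeries_one]
    have e1 : Nat.card (A.subgroupOf (commutator Q)) * A.relIndex (commutator Q) =
      Nat.card (commutator Q) := Subgroup.card_mul_index _
    have e2 : Nat.card (A.subgroupOf (commutator Q)) ≤ p := by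
      have hcyc : IsCyclic (A.subgroupOf (commutator Q)) := by
        let φ : A.subgroupOf (commutator Q) →* A :=
          { toFun := fun x => ⟨x.1.1, Subgroup.mem_subgroupOf.mp x.2⟩
            map_one' := rfl
            map_mul' := fun _ _ => rfl }
        refine isCyclic_of_injective φ ?_
        intro a b hab
        have : a.1.1 = b.1.1 := congrArg (fun z : A => z.1) hab
        exact Subtype.ext (Subtype.ext this)
      rw [← IsCyclic.exponent_eq_card]
      apply Nat.le_of_dvd hp.pos
      apply Monoid.exponent_dvd_of_forall_pow_eq_one
      intro g
      apply Subtype.ext; apply Subtype.ext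
      exact hexp _ g.1.2
    have e3 : A.relIndex (commutator Q) * p ≤ p ^ f := by
      have h1 : A.relIndex (A ⊔ commutator Q) * (A ⊔ commutator Q).index = A.index :=
        Subgroup.relIndex_mul_index le_sup_left
      have h2 : p ≤ (A ⊔ commutator Q).index := by
        obtain ⟨n, hn⟩ := hpg.index (A ⊔ commutator Q)
        have hne : (A ⊔ commutator Q).index ≠ 1 := by
          rwa [Ne, Subgroup.index_eq_one]
        rw [hn] at hne ⊢
        exact Nat.le_self_pow (by rintro rfl; simp at hne) p
      have h3 : A.relIndex (commutator Q) ≤ A.relIndex (A ⊔ commutator Q) :=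
        Subgroup.relIndex_le_of_le_right le_sup_right
          (fun h0 => Subgroup.index_ne_zero_of_finite (H := A) (Subgroup.index_eq_zero_of_relIndex_eq_zero h0))
      exact (Nat.mul_le_mul h3 h2).trans (h1.le.trans hi)
    rw [← e1, mul_comm]
    exact (Nat.mul_le_mul_left _ e2).trans e3
  have hk : ∀ k, k ≤ f → Nat.card ((⊤ : Subgroup Q).lowerCentralSeries (k + 1)) ≤ p ^ (f - k) := by
    intro k
    induction k with
    | zero => intro _; exact hc1
    | succ k ih =>
      intro hkf
      rcases hstep (k + 1) with h | h
      · rw [h]; simpa using Nat.one_le_pow _ _ hp.pos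
      · have h2 := h.trans (ih (by omega))
        have : p ^ (f - k) = p ^ (f - (k + 1)) * p := by
          rw [← pow_succ]; congr 1; omega
        rw [this] at h2
        exact Nat.le_of_mul_le_mul_right h2 hp.pos
  have := hk f le_rfl
  simp only [Nat.sub_self, pow_zero] at this
  exact Subgroup.eq_bot_of_card_le _ this

lemma MhoOne_normal {p : ℕ} {G : Type} [Group G] (H : Subgroup G) [hH : H.Normal] :
    (MhoOne p H).Normal := by
  unfold MhoOne
  refine ⟨fun a ha g => ?_⟩
  induction ha using Subgroup.closure_induction with
  | mem a ha =>
    obtain ⟨c, hc, rfl⟩ := ha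
    exact Subgroup.subset_closure ⟨g * c * g⁻¹, hH.conj_mem c hc g, conj_pow.symm⟩
  | one => simp
  | mul a b _ _ ha hb =>
    have := mul_mem ha hb
    convert this using 1; group
  | inv a _ ha =>
    have := inv_mem ha
    convert this using 1; group

lemma reg_top {p f : ℕ} (hp : p.Prime) (hpf : f + 2 ≤ p) {G : Type} [Group G]
    (h : CycInd p f G) (x y : G) :
    ∃ z ∈ MhoOne p (commutator G), x ^ p * y ^ p = (x * y) ^ p * z := by
  have := MhoOne_normal (p := p) (commutator G)
  refine ⟨((x * y) ^ p)⁻¹ * (x ^ p * y ^ p), ?_, by group⟩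
  rw [← QuotientGroup.eq]
  have hex : ∀ a ∈ commutator (G ⧸ MhoOne p (commutator G)), a ^ p = 1 := by
    intro a ha
    have e : (commutator G).map (QuotientGroup.mk' (MhoOne p (commutator G))) =
        commutator (G ⧸ MhoOne p (commutator G)) := by
      refine (Subgroup.map_commutator _ _ _).trans ?_
      rw [commutator_def (G ⧸ MhoOne p (commutator G)), Subgroup.map_top_of_surjective _ (QuotientGroup.mk'_surjective _)]
    rw [← e] at ha
    obtain ⟨c, hc, rfl⟩ := ha
    rw [← map_pow]
    exact (QuotientGroup.eq_one_iff _).mpr (Subgroup.subset_closure ⟨c, hc, rfl⟩)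
  have hb := lcs_bot hp (h.quot (MhoOne p (commutator G))) hex
  have hb' : (⊤ : Subgroup (G ⧸ MhoOne p (commutator G))).lowerCentralSeries (p - 1) = ⊥ :=
    le_bot_iff.mp (hb ▸ Subgroup.lowerCentralSeries_antitone _ (by omega))
  have := pow_hom_of_lcs hp hb' hex (x : G ⧸ MhoOne p (commutator G)) y
  simpa using this.symm

lemma CycInd.regular {p f : ℕ} (hp : p.Prime) (hpf : f + 2 ≤ p) {G : Type} [Group G]
    (h : CycInd p f G) : IsRegularPGroup p G := by
  intro x y
  set K := Subgroup.closure {x, y} with hK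
  have hx : x ∈ K := Subgroup.subset_closure (by simp)
  have hy : y ∈ K := Subgroup.subset_closure (by simp)
  obtain ⟨z, hz, he⟩ := reg_top hp hpf (h.sub K) ⟨x, hx⟩ ⟨y, hy⟩
  refine ⟨z, ?_, congrArg Subtype.val he⟩
  have : (MhoOne p (commutator K)).map K.subtype ≤ MhoOne p ⁅K, K⁆ := by
    unfold MhoOne
    rw [MonoidHom.map_closure, Subgroup.closure_le]
    rintro _ ⟨_, ⟨c, hc, rfl⟩, rfl⟩
    refine Subgroup.subset_closure ⟨c, ?_, by simp⟩
    rw [← Subgroup.map_subtype_commutator]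
    exact ⟨c, hc, rfl⟩
  exact this ⟨z, hz, rfl⟩

lemma omega_one {p f : ℕ} (hp : p.Prime) (hpf : f + 2 ≤ p) (N : ℕ) :
    ∀ (G : Type) [Group G], CycInd p f G → Nat.card G ≤ N → ∀ x y : G, x ^ p = 1 → y ^ p = 1 →
      (x * y) ^ p = 1 := by
  have : Fact p.Prime := ⟨hp⟩
  induction N with
  | zero =>
    intro G _ h hc
    have := h.1
    have : 0 < Nat.card G := Nat.card_pos
    omega
  | succ N ih =>
    intro G _ h hc x y hx hy
    have := h.1
    have hprop : ∀ H : Subgroup G, H ≠ ⊤ → ∀ a ∈ H, ∀ b ∈ H, a ^ p = 1 → b ^ p = 1 →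
        (a * b) ^ p = 1 := by
      intro H hH a ha b hb h1 h2
      have hlt : Nat.card H < Nat.card G := by
        refine lt_of_le_of_ne (Subgroup.card_le_card_group H) ?_
        intro e
        exact hH (Subgroup.eq_top_of_card_eq H e)
      have := ih H (h.sub H) (by omega) ⟨a, ha⟩ ⟨b, hb⟩ (Subtype.ext h1) (Subtype.ext h2)
      exact congrArg Subtype.val this
    by_cases hK : Subgroup.closure {x, y} = ⊤
    swap
    · exact hprop _ hK x (Subgroup.subset_closure (by simp)) y (Subgroup.subset_closure (by simp))
        hx hy
    by_cases hN : Subgroup.zpowers x ⊔ commutator G = ⊤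
    · have h1 := nongen h.2.1 _ hN
      have hyx : y ∈ Subgroup.zpowers x := h1 ▸ Subgroup.mem_top y
      obtain ⟨k, rfl⟩ := hyx
      have hc : Commute x (x ^ k) := (Commute.refl x).zpow_right k
      have := hc.mul_pow p
      rw [this, hx, hy, one_mul]
    set M := Subgroup.zpowers x ⊔ commutator G with hM
    have hMn : M.Normal := Subgroup.Normal.of_commutator_le _ le_sup_right
    have hxM : x ∈ M := (le_sup_left : _ ≤ M) (Subgroup.mem_zpowers x)
    let W : Subgroup G :=
      { carrier := {c | c ∈ M ∧ c ^ p = 1}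
        one_mem' := ⟨one_mem _, one_pow _⟩
        mul_mem' := fun {a b} ha hb => ⟨mul_mem ha.1 hb.1, hprop M hN a ha.1 b hb.1 ha.2 hb.2⟩
        inv_mem' := fun {a} ha => ⟨inv_mem ha.1, by rw [inv_pow, ha.2, inv_one]⟩ }
    have hWn : W.Normal := ⟨fun c hc g => ⟨hMn.conj_mem c hc.1 g, by
      rw [conj_pow, hc.2]; simp⟩⟩
    have hxW : x ∈ W := ⟨hxM, hx⟩
    have hcyc : ∀ g : G, ∃ k : ℤ, (g : G ⧸ W) = (y : G ⧸ W) ^ k := by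
      intro g
      have hg : g ∈ Subgroup.closure {x, y} := hK ▸ Subgroup.mem_top g
      have hle : Subgroup.closure {x, y} ≤
          (Subgroup.zpowers (y : G ⧸ W)).comap (QuotientGroup.mk' W) := by
        rw [Subgroup.closure_le]
        intro a ha
        rcases ha with rfl | rfl
        · have : (QuotientGroup.mk' W) a = 1 := (QuotientGroup.eq_one_iff a).mpr hxW
          simp only [SetLike.mem_coe, Subgroup.mem_comap]
          rw [this]; exact one_mem _
        · exact Subgroup.mem_zpowers _
      obtain ⟨k, hk⟩ := hle hg
      exact ⟨k, hk.symm⟩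
    have hcW : commutator G ≤ W := by
      rw [commutator_def, Subgroup.commutator_le]
      intro a _ b _
      obtain ⟨k, hk⟩ := hcyc a
      obtain ⟨l, hl⟩ := hcyc b
      rw [← QuotientGroup.eq_one_iff]
      have : ((⁅a, b⁆ : G) : G ⧸ W) = ⁅(a : G ⧸ W), (b : G ⧸ W)⁆ := rfl
      rw [this, hk, hl, commutatorElement_eq_one_iff_commute]
      exact (Commute.refl _).zpow_zpow k l
    obtain ⟨z, hz, he⟩ := reg_top hp hpf h x y
    have hzb : MhoOne p (commutator G) ≤ ⊥ := by
      unfold MhoOne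
      rw [Subgroup.closure_le]
      rintro _ ⟨c, hc, rfl⟩
      exact (hcW hc).2
    have hz1 : z = 1 := hzb hz
    rw [hx, hy, hz1] at he
    simpa using he.symm

lemma omega_all {p f : ℕ} (hp : p.Prime) (hpf : f + 2 ≤ p) (i : ℕ) :
    ∀ (G : Type) [Group G], CycInd p f G → ∀ x y : G, x ^ p ^ i = 1 → y ^ p ^ i = 1 →
      (x * y) ^ p ^ i = 1 := by
  induction i with
  | zero => intro G _ h x y hx hy; simp at *; simp [hx, hy]
  | succ i ih =>
    intro G _ h x y hx hy
    let W : Subgroup G :=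
      { carrier := {c | c ^ p = 1}
        one_mem' := one_pow _
        mul_mem' := fun {a b} ha hb => omega_one hp hpf _ G h le_rfl a b ha hb
        inv_mem' := fun {a} ha => by
          have ha : a ^ p = 1 := ha
          show a⁻¹ ^ p = 1
          rw [inv_pow, ha, inv_one] }
    have hWn : W.Normal := ⟨fun c hc g => by
      have hc : c ^ p = 1 := hc
      show (g * c * g⁻¹) ^ p = 1
      rw [conj_pow, hc]; simp⟩
    have hq : ∀ a : G, (a : G ⧸ W) ^ p ^ i = 1 ↔ a ^ p ^ (i + 1) = 1 := by
      intro a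
      rw [← QuotientGroup.mk_pow, QuotientGroup.eq_one_iff]
      show (a ^ p ^ i) ^ p = 1 ↔ _
      rw [← pow_mul, ← pow_succ]
    rw [← hq] at hx hy ⊢
    exact ih (G ⧸ W) (h.quot W) _ _ hx hy

lemma mem_omega {p f : ℕ} (hp : p.Prime) (hpf : f + 2 ≤ p) {G : Type} [Group G]
    (h : CycInd p f G) (i : ℕ) (x : G) : x ∈ OmegaSubgroup p G i ↔ x ^ p ^ i = 1 := by
  constructor
  · intro hx
    unfold OmegaSubgroup at hx
    induction hx using Subgroup.closure_induction with
    | mem x hx => exact hx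
    | one => exact one_pow _
    | mul x y _ _ hx hy => exact omega_all hp hpf i G h x y hx hy
    | inv x _ hx => rw [inv_pow, hx, inv_one]
  · intro hx; exact Subgroup.subset_closure hx

lemma cycInd_of_exponent {p n a f : ℕ} (hp : p.Prime) {G : Type} [Group G]
    (hc : Nat.card G = p ^ n) (he : Monoid.exponent G = p ^ a) (hf : n - a ≤ f) :
    CycInd p f G ∧ a ≤ n ∧ ∃ g : G, orderOf g = p ^ a := by
  have : Fact p.Prime := ⟨hp⟩
  have hfin : Finite G := Nat.finite_of_card_ne_zero (by rw [hc]; exact (pow_pos hp.pos n).ne')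
  have hg : ∃ g : G, orderOf g = p ^ a := by
    cases a with
    | zero => exact ⟨1, by simp⟩
    | succ a =>
      by_contra hcon
      push Not at hcon
      have hall : ∀ g : G, g ^ p ^ a = 1 := by
        intro g
        by_contra hg
        exact hcon g (orderOf_eq_prime_pow hg (he ▸ Monoid.pow_exponent_eq_one g))
      have := Monoid.exponent_dvd_of_forall_pow_eq_one hall
      rw [he, Nat.pow_dvd_pow_iff_le_right hp.one_lt] at this
      omega
  obtain ⟨g, hg⟩ := hg
  have han : a ≤ n := by
    have := orderOf_dvd_natCard g
    rwa [hg, hc, Nat.pow_dvd_pow_iff_le_right hp.one_lt] at this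
  refine ⟨⟨hfin, IsPGroup.of_card hc, Subgroup.zpowers g, inferInstance, ?_⟩, han, g, hg⟩
  have h1 := Subgroup.card_mul_index (Subgroup.zpowers g)
  rw [Nat.card_zpowers, hg, hc] at h1
  have h2 : p ^ n = p ^ a * p ^ (n - a) := by rw [← pow_add]; congr 1; omega
  rw [h2] at h1
  rw [Nat.eq_of_mul_eq_mul_left (pow_pos hp.pos a) h1]
  exact Nat.pow_le_pow_right hp.pos hf

lemma omega_mono_s16 {p : ℕ} {G : Type} [Group G] {i j : ℕ} (h : i ≤ j) :
    OmegaSubgroup p G i ≤ OmegaSubgroup p G j := by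
  apply Subgroup.closure_mono
  intro x hx
  have hx : x ^ p ^ i = 1 := hx
  show x ^ p ^ j = 1
  rw [← Nat.add_sub_cancel' h, pow_add, pow_mul, hx, one_pow]

lemma pow_omegaInv {p : ℕ} (hp : p.Prime) {G : Type} [Group G] [Finite G] (hpg : IsPGroup p G)
    (i : ℕ) : p ^ omegaInv p G i =
      (OmegaSubgroup p G (i - 1)).relIndex (OmegaSubgroup p G i) := by
  have : Fact p.Prime := ⟨hp⟩
  obtain ⟨k, hk⟩ := (hpg.to_subgroup (OmegaSubgroup p G i)).index
    ((OmegaSubgroup p G (i - 1)).subgroupOf (OmegaSubgroup p G i))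
  have hk' : (OmegaSubgroup p G (i - 1)).relIndex (OmegaSubgroup p G i) = p ^ k := hk
  unfold omegaInv
  rw [hk', hp.factorization_pow]; simp

lemma omegaInv_eq_zero {p a : ℕ} {G : Type} [Group G]
    (he : Monoid.exponent G = p ^ a) {i : ℕ} (hi : a < i) : omegaInv p G i = 0 := by
  have h : OmegaSubgroup p G (i - 1) = ⊤ := by
    rw [eq_top_iff]
    intro x _
    apply omega_mono_s16 (show a ≤ i - 1 by omega)
    exact Subgroup.subset_closure (show x ^ p ^ a = 1 from he ▸ Monoid.pow_exponent_eq_one x)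
  unfold omegaInv
  rw [h]; simp

lemma muInv_eq {p a : ℕ} {G : Type} [Group G]
    (he : Monoid.exponent G = p ^ a) (j : ℕ) :
    muInv p G (j + 1) = ((Finset.range a).filter fun i => j + 1 ≤ omegaInv p G (i + 1)).card := by
  unfold muInv
  rw [Nat.subtype_card (((Finset.range a).filter fun i => j + 1 ≤ omegaInv p G (i + 1)).map
    ⟨Nat.succ, Nat.succ_injective⟩), Finset.card_map]
  intro i
  simp only [Finset.mem_map, Finset.mem_filter, Finset.mem_range, Function.Embedding.coeFn_mk]
  constructor
  · rintro ⟨i, ⟨_, h⟩, rfl⟩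
    exact ⟨by omega, h⟩
  · rintro ⟨h1, h2⟩
    refine ⟨i - 1, ⟨?_, ?_⟩, by omega⟩
    · by_contra hcon
      have := omegaInv_eq_zero (G := G) he (show a < i by omega)
      omega
    · rwa [Nat.sub_add_cancel h1]

lemma muInv_one_le {p a : ℕ} {G : Type} [Group G]
    (he : Monoid.exponent G = p ^ a) : muInv p G 1 ≤ a := by
  rw [show 1 = 0 + 1 from rfl, muInv_eq he]
  exact (Finset.card_filter_le _ _).trans (by simp)

lemma muInv_one {p n a f : ℕ} (hp : p.Prime) (hpf : f + 2 ≤ p) {G : Type} [Group G]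
    (hc : Nat.card G = p ^ n) (he : Monoid.exponent G = p ^ a) (hf : n - a ≤ f) :
    muInv p G 1 = a := by
  obtain ⟨hC, han, g, hg⟩ := cycInd_of_exponent hp hc he hf
  have := hC.1
  rw [show 1 = 0 + 1 from rfl, muInv_eq he, Finset.filter_true_of_mem, Finset.card_range]
  intro i hi
  rw [Finset.mem_range] at hi
  by_contra hcon
  have h0 : omegaInv p G (i + 1) = 0 := by omega
  have h1 := pow_omegaInv hp hC.2.1 (i + 1)
  rw [h0, pow_zero, eq_comm, Subgroup.relIndex_eq_one] at h1
  have h2 : g ^ p ^ (a - (i + 1)) ∈ OmegaSubgroup p G (i + 1) := by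
    rw [mem_omega hp hpf hC, ← pow_mul, ← pow_add, Nat.sub_add_cancel hi, ← hg, pow_orderOf_eq_one]
  have h3 := h1 h2
  rw [mem_omega hp hpf hC, ← pow_mul, ← pow_add] at h3
  have h4 := orderOf_dvd_of_pow_eq_one h3
  rw [hg, Nat.pow_dvd_pow_iff_le_right hp.one_lt] at h4
  omega

lemma sum_omegaInv {p n a f : ℕ} (hp : p.Prime) (hpf : f + 2 ≤ p) {G : Type} [Group G]
    (hc : Nat.card G = p ^ n) (he : Monoid.exponent G = p ^ a) (hf : n - a ≤ f) :
    ∑ i ∈ Finset.range a, omegaInv p G (i + 1) = n := by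
  obtain ⟨hC, han, g, hg⟩ := cycInd_of_exponent hp hc he hf
  have := hC.1
  have key : ∀ m, p ^ (∑ i ∈ Finset.range m, omegaInv p G (i + 1)) =
      Nat.card (OmegaSubgroup p G m) := by
    intro m
    induction m with
    | zero =>
      have : OmegaSubgroup p G 0 = ⊥ := by
        rw [eq_bot_iff]
        intro x hx
        rw [mem_omega hp hpf hC] at hx
        simpa using hx
      rw [this]; simp
    | succ m ih =>
      rw [Finset.sum_range_succ, pow_add, ih, pow_omegaInv hp hC.2.1, Nat.add_sub_cancel,
        ← Subgroup.relIndex_bot_left, ← Subgroup.relIndex_bot_left]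
      exact Subgroup.relIndex_mul_relIndex _ _ _ bot_le (omega_mono_s16 (Nat.le_succ m))
  have h1 := key a
  have h2 : OmegaSubgroup p G a = ⊤ := by
    rw [eq_top_iff]
    intro x _
    exact Subgroup.subset_closure (show x ^ p ^ a = 1 from he ▸ Monoid.pow_exponent_eq_one x)
  rw [h2, Subgroup.card_top, hc] at h1
  exact Nat.pow_right_injective hp.two_le h1

lemma sum_muInv {p n a f : ℕ} (hp : p.Prime) (hpf : f + 2 ≤ p) {G : Type} [Group G]
    (hc : Nat.card G = p ^ n) (he : Monoid.exponent G = p ^ a) (hf : n - a ≤ f) (J : ℕ)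
    (hJ : n ≤ J) : ∑ j ∈ Finset.range J, muInv p G (j + 1) = n := by
  have hs := sum_omegaInv hp hpf hc he hf
  simp_rw [muInv_eq he, Finset.card_filter]
  rw [Finset.sum_comm]
  refine Eq.trans (Finset.sum_congr rfl fun i hi => ?_) hs
  have hle : omegaInv p G (i + 1) ≤ n := by
    conv_rhs => rw [← hs]
    exact Finset.single_le_sum (f := fun i => omegaInv p G (i + 1)) (fun _ _ => Nat.zero_le _) hi
  rw [← Finset.card_filter]
  have : (Finset.range J).filter (fun j => j + 1 ≤ omegaInv p G (i + 1)) =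
      Finset.range (omegaInv p G (i + 1)) := by
    ext j
    simp only [Finset.mem_filter, Finset.mem_range]
    omega
  rw [this, Finset.card_range]

/-- the list of a partition -/
def pList {f : ℕ} (P : Nat.Partition f) : List ℕ := (P.parts.sort (· ≤ ·)).reverse

lemma pList_sum {f : ℕ} (P : Nat.Partition f) : (pList P).sum = f := by
  unfold pList
  rw [List.sum_reverse, ← Multiset.sum_coe, Multiset.sort_eq, P.parts_sum]

lemma pList_pos {f : ℕ} (P : Nat.Partition f) : ∀ x ∈ pList P, 0 < x := by
  intro x hx
  unfold pList at hx
  rw [List.mem_reverse, Multiset.mem_sort] at hx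
  exact P.parts_pos hx

lemma list_ext_getD {l l' : List ℕ} (hl : ∀ x ∈ l, 0 < x) (hl' : ∀ x ∈ l', 0 < x)
    (h : ∀ i, l.getD i 0 = l'.getD i 0) : l = l' := by
  have key : ∀ l : List ℕ, (∀ x ∈ l, 0 < x) → ∀ i, i < l.length ↔ 0 < l.getD i 0 := by
    intro l hl i
    constructor
    · intro hi
      rw [List.getD_eq_getElem _ _ hi]
      exact hl _ (List.getElem_mem hi)
    · intro hi
      by_contra hcon
      rw [List.getD_eq_default _ _ (by omega)] at hi
      omega
  have hlen : l.length = l'.length := by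
    apply le_antisymm
    · by_contra hcon
      have h1 := (key l hl l'.length).mp (by omega)
      rw [h, ← key l' hl'] at h1
      omega
    · by_contra hcon
      have h1 := (key l' hl' l.length).mp (by omega)
      rw [← h, ← key l hl] at h1
      omega
  apply List.ext_getElem hlen
  intro i h1 h2
  have := h i
  rwa [List.getD_eq_getElem _ _ h1, List.getD_eq_getElem _ _ h2] at this

lemma pList_inj {f : ℕ} {P P' : Nat.Partition f}
    (h : ∀ i, (pList P).getD i 0 = (pList P').getD i 0) : P = P' := by
  have h1 := list_ext_getD (pList_pos P) (pList_pos P') h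
  unfold pList at h1
  have h2 := List.reverse_injective h1
  apply Nat.Partition.ext
  rw [← Multiset.sort_eq P.parts (· ≤ ·), h2, Multiset.sort_eq]

lemma exists_pList {f J : ℕ} (m : ℕ → ℕ) (hm : Antitone m)
    (hs : ∀ K, J ≤ K → ∑ j ∈ Finset.range K, m j = f) :
    ∃ P : Nat.Partition f, ∀ i, (pList P).getD i 0 = m i := by
  have hz : ∃ j, m j = 0 := ⟨J, by
    have h1 := hs J le_rfl
    have h2 := hs (J + 1) (by omega)
    rw [Finset.sum_range_succ] at h2
    omega⟩
  classical
  set N := Nat.find hz with hN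
  have hN0 : m N = 0 := Nat.find_spec hz
  have hzero : ∀ j, N ≤ j → m j = 0 := fun j hj => by have := hm hj; omega
  have hpos : ∀ j, j < N → 0 < m j := fun j hj => Nat.pos_of_ne_zero (Nat.find_min hz hj)
  set L := (List.range N).map m with hL
  have hLsum : L.sum = f := by
    rw [← hs (max J N) (le_max_left _ _), hL]
    have e : ((List.range N).map m).sum = ∑ j ∈ Finset.range N, m j := rfl
    rw [e]
    refine Finset.sum_subset (Finset.range_mono (le_max_right _ _)) ?_
    intro j _ hj
    rw [Finset.mem_range] at hj
    exact hzero j (by omega)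
  let P : Nat.Partition f := ⟨(L : Multiset ℕ), by
    intro i hi
    simp only [hL, Multiset.mem_coe, List.mem_map, List.mem_range] at hi
    obtain ⟨j, hj, rfl⟩ := hi
    exact hpos j hj, by simpa using hLsum⟩
  refine ⟨P, ?_⟩
  have hP : pList P = L := by
    unfold pList
    rw [← List.reverse_reverse L]
    congr 1
    apply List.Perm.eq_of_pairwise' (r := (· ≤ ·))
    · exact Multiset.pairwise_sort _ _
    · rw [List.pairwise_reverse, hL, List.pairwise_map]
      exact List.pairwise_lt_range.imp fun {a b} h => hm h.le
    · rw [← Multiset.coe_eq_coe, Multiset.sort_eq, Multiset.coe_reverse]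
  intro i
  rw [hP]
  rcases Nat.lt_or_ge i N with h | h
  · rw [List.getD_eq_getElem _ _ (by simpa [hL] using h)]
    simp [hL]
  · rw [List.getD_eq_default _ _ (by simpa [hL] using h), hzero i h]

lemma muInv_anti {p a : ℕ} {G : Type} [Group G]
    (he : Monoid.exponent G = p ^ a) : Antitone fun j => muInv p G (j + 1) := by
  intro i j hij
  simp only [muInv_eq he]
  apply Finset.card_le_card
  intro x hx
  simp only [Finset.mem_filter] at hx ⊢
  exact ⟨hx.1, by omega⟩

lemma char_coexp {p n f : ℕ} (hf1 : 1 ≤ f) (hp : p.Prime) (hpf : f + 2 ≤ p) (hn : 2 * f ≤ n)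
    {G : Type} [Group G] (hc : Nat.card G = p ^ n) :
    (∃ e : ℕ, Monoid.exponent G = p ^ e ∧ n - e = f) ↔
      ∃ P : Nat.Partition f, IsRegularPGroup p G ∧ HasTypeInvariants p G ((n - f) :: pList P) := by
  constructor
  · rintro ⟨e, he, hef⟩
    refine ?_
    have hC := (cycInd_of_exponent hp hc he hef.le).1
    have h1 := muInv_one hp hpf hc he hef.le
    obtain ⟨P, hP⟩ := exists_pList (f := f) (J := n) (fun j => muInv p G (j + 1 + 1))
      (fun i j hij => muInv_anti he (by omega)) (by
        intro K hK
        have := sum_muInv hp hpf hc he hef.le (K + 1) (by omega)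
        rw [Finset.sum_range_succ'] at this
        simp only [zero_add] at this
        omega)
    refine ⟨P, hC.regular hp hpf, ?_⟩
    intro i
    cases i with
    | zero => simp only [zero_add, List.getD_cons_zero]; omega
    | succ i => rw [List.getD_cons_succ, hP]
  · rintro ⟨P, -, hT⟩
    have : Fact p.Prime := ⟨hp⟩
    have hd : Monoid.exponent G ∣ p ^ n := hc ▸ Group.exponent_dvd_nat_card
    obtain ⟨a, ha, he⟩ := (Nat.dvd_prime_pow hp).mp hd
    have h0 := hT 0
    simp only [zero_add, List.getD_cons_zero] at h0
    have h1 := muInv_one_le he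
    have h2 := muInv_one hp hpf hc he (by omega)
    exact ⟨a, he, by omega⟩

lemma omegaInv_equiv {p : ℕ} {G H : Type} [Group G] [Group H] (φ : G ≃* H) (i : ℕ) :
    omegaInv p G i = omegaInv p H i := by
  have hm : ∀ i, (OmegaSubgroup p G i).map φ.toMonoidHom = OmegaSubgroup p H i := by
    intro i
    unfold OmegaSubgroup
    rw [MonoidHom.map_closure]
    congr 1
    ext y
    constructor
    · rintro ⟨x, hx, rfl⟩
      have hx : x ^ p ^ i = 1 := hx
      show (φ x) ^ p ^ i = 1
      rw [← map_pow, hx, map_one]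
    · intro hy
      have hy : y ^ p ^ i = 1 := hy
      refine ⟨φ.symm y, ?_, by simp⟩
      show (φ.symm y) ^ p ^ i = 1
      rw [← map_pow, hy, map_one]
  unfold omegaInv
  rw [← hm, ← hm, Subgroup.relIndex_map_map_of_injective _ _ φ.injective]

lemma muInv_equiv {p : ℕ} {G H : Type} [Group G] [Group H] (φ : G ≃* H) (j : ℕ) :
    muInv p G j = muInv p H j := by
  unfold muInv
  simp_rw [omegaInv_equiv (p := p) φ]

lemma quot_count {α ι : Type} [Fintype ι] (R : α → α → Prop) (Q : α → Prop)
    (S : ι → α → Prop) [Finite α]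
    (hQ : ∀ a, Q a ↔ ∃ i, S i a)
    (hR : ∀ i j a b, S i a → S j b → R a b → i = j)
    (hrefl : ∀ a, R a a) :
    Nat.card (Quot fun s t : {a // Q a} => R s.1 t.1) =
      ∑ i, Nat.card (Quot fun s t : {a // S i a} => R s.1 t.1) := by
  classical
  rw [← Nat.card_sigma]
  have hsig : ∀ i j a b (ha : S i a) (hb : S j b), R a b →
      (⟨i, Quot.mk _ ⟨a, ha⟩⟩ : Σ i, Quot fun s t : {a // S i a} => R s.1 t.1) =
        ⟨j, Quot.mk _ ⟨b, hb⟩⟩ := by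
    intro i j a b ha hb h
    obtain rfl := hR i j a b ha hb h
    congr 1
    exact Quot.sound h
  choose c hc using fun a : {a // Q a} => (hQ a.1).mp a.2
  refine Nat.card_congr ⟨Quot.lift (fun a => ⟨c a, Quot.mk _ ⟨a.1, hc a⟩⟩) ?_,
    fun x => Quot.map (fun a : {a // S x.1 a} => (⟨a.1, (hQ a.1).mpr ⟨x.1, a.2⟩⟩ : {a // Q a})) (fun _ _ h => h) x.2, ?_, ?_⟩
  · intro a b h
    exact hsig _ _ _ _ _ _ h
  · rintro ⟨a⟩; rfl
  · rintro ⟨i, ⟨a⟩⟩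
    exact hsig _ _ _ _ _ _ (hrefl _)

lemma finite_group_fin (N : ℕ) : Finite (Group (Fin N)) := by
  apply Finite.of_injective (fun s : Group (Fin N) => (s.mul : Fin N → Fin N → Fin N))
  intro s t h
  apply Group.ext
  funext a b
  exact congrFun (congrFun h a) b

lemma PsiType_eq {p e n : ℕ} (l : List ℕ) (h : e + l.sum = n) :
    PsiType p e l = groupClassCount (p ^ n) fun s =>
      letI := s
      IsRegularPGroup p (Fin (p ^ n)) ∧ HasTypeInvariants p (Fin (p ^ n)) (e :: l) := by
  subst h; rfl

/-- Let `f ≥ 1` and `p` a prime with `p > f + 1`.  Then for every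
`n ≥ 2f`, `Ψ_{n,f}^p` equals the sum over all partitions `λ = (λ_1, ..., λ_k)` of `f`
(written in non-increasing order) of `Ψ_{n-f}^p(λ_1, ..., λ_k)`. -/
theorem psi_coexp_eq_sum_psi_type (f p : ℕ) (hf : 1 ≤ f) (hp : p.Prime) (hpf : p > f + 1)
    (n : ℕ) (hn : 2 * f ≤ n) :
    PsiCoexp p n f =
      ∑ P : Nat.Partition f, PsiType p (n - f) ((P.parts.sort (· ≤ ·)).reverse) := by
  have hfin := finite_group_fin (p ^ n)
  have hrhs : ∀ P : Nat.Partition f,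
      PsiType p (n - f) ((P.parts.sort (· ≤ ·)).reverse) =
      groupClassCount (p ^ n) fun s =>
        letI := s
        IsRegularPGroup p (Fin (p ^ n)) ∧
          HasTypeInvariants p (Fin (p ^ n)) ((n - f) :: pList P) := by
    intro P
    refine PsiType_eq (pList P) ?_
    rw [pList_sum]; omega
  simp_rw [hrhs]
  unfold PsiCoexp groupClassCount
  refine quot_count (fun s t : Group (Fin (p ^ n)) =>
    Nonempty (@MulEquiv (Fin (p ^ n)) (Fin (p ^ n)) (mulOfGroup _ s) (mulOfGroup _ t))) _
    (fun (P : Nat.Partition f) (s : Group (Fin (p ^ n))) =>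
      letI := s
      IsRegularPGroup p (Fin (p ^ n)) ∧
          HasTypeInvariants p (Fin (p ^ n)) ((n - f) :: pList P)) ?_ ?_ ?_
  · intro s
    letI := s
    exact char_coexp hf hp (by omega) hn (by simp)
  · rintro P P' s t ⟨-, hs⟩ ⟨-, ht⟩ ⟨φ⟩
    apply pList_inj
    intro i
    have h1 := hs (i + 1)
    have h2 := ht (i + 1)
    rw [List.getD_cons_succ] at h1 h2
    rw [← h1, ← h2]
    exact @muInv_equiv p (Fin (p ^ n)) (Fin (p ^ n)) s t φ _
  · intro s
    exact ⟨@MulEquiv.refl _ (mulOfGroup _ s)⟩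
end
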